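/- arXiv:math/0503251 — 2 statements merged into one kernel-verified Lean document; each statement's English description precedes it below -/
import Mathlib

section
/- Let d ≥ 1, D ≥ 1, and let (A_n)_{n≥1} be rotor-router aggregation in ℤ^d built from any configuration of rotor stacks with discrepancy at most D. Then there is a constant C = C(d), independent of n, D, and the rotor configuration, such that for all n ≥ 1, ψ(A_n) ≤ ψ(B_n) + Φ(n) + C D^{2 − 1/(4d)} n^{1 + 1/d}. -/
open scoped BigOperators Pointwise symmDiff
open MeasureTheory Filter

noncomputable section
open scoped Classical
namespace RotorRouterPaper

/-- Sites of the lattice `ℤ^d`. -/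
abbrev Site (d : ℕ) := Fin d → ℤ

/-- The `i`-th standard basis vector of `ℤ^d`. -/
def unitVec (d : ℕ) (i : Fin d) : Site d := fun j => if j = i then 1 else 0

/-- Squared Euclidean norm of a lattice point. -/
def nsq {d : ℕ} (x : Site d) : ℝ := ∑ i, ((x i : ℝ)) ^ 2

/-- Euclidean norm of a lattice point. -/
def enorm {d : ℕ} (x : Site d) : ℝ := Real.sqrt (nsq x)

/-- Adjacency `x ∼ y`: Euclidean distance one. -/
def Adj {d : ℕ} (x y : Site d) : Prop := nsq (x - y) = 1

/-- `ω_d`, the Lebesgue volume of the unit ball in `ℝ^d`. -/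
def ballVol (d : ℕ) : ℝ := (volume (Metric.ball (0 : EuclideanSpace ℝ (Fin d)) 1)).toReal

/-- The lattice ball `B_n = {y ∈ ℤ^d : ω_d ‖y‖^d < n}`. -/
def lball (d n : ℕ) : Set (Site d) := {y | ballVol d * enorm y ^ d < (n : ℝ)}

/-- Characterization of the expected exit time function of a (finite) region `A ⊆ ℤ^d`:
it vanishes off `A` and its discrete Laplacian is `-1` on `A`. -/
def IsExitFun (d : ℕ) (A : Set (Site d)) (e : Site d → ℝ) : Prop :=
  (∀ x, x ∉ A → e x = 0) ∧
  ∀ x ∈ A, (1 / (2 * (d : ℝ))) * (∑ i, (e (x + unitVec d i) + e (x - unitVec d i))) - e x = -1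

/-- The expected exit time function `x ↦ e_x(A)` (the unique function satisfying
`IsExitFun` when `A` is finite). -/
def exitFun (d : ℕ) (A : Set (Site d)) : Site d → ℝ :=
  if h : ∃ e, IsExitFun d A e then h.choose else 0

/-- `ē(A) = sup_x e_x(A)`. -/
def ebar (d : ℕ) (A : Set (Site d)) : ℝ := sSup (Set.range (exitFun d A))

/-- `φ(n) = sup {ē(A) - e_o(B_n) : A ⊆ ℤ^d, |A| = n}`. -/
def phi (d n : ℕ) : ℝ :=
  sSup {t | ∃ A : Set (Site d), A.Finite ∧ A.ncard = n ∧ t = ebar d A - exitFun d (lball d n) 0}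

/-- `Φ(n) = ∑_{j=1}^n φ(j)`. -/
def PhiSum (d n : ℕ) : ℝ := ∑ j ∈ Finset.Icc 1 n, phi d j

/-- `ψ(A) = ∑_{x ∈ A} ‖x‖²`. -/
def psi {d : ℕ} (A : Set (Site d)) : ℝ := ∑ᶠ x ∈ A, nsq x

/-- A cardinal direction in `ℤ^d`: one of `±e_1, …, ±e_d`. -/
abbrev Dir (d : ℕ) := Fin d × Bool

/-- The lattice step vector of a cardinal direction. -/
def dirVec (d : ℕ) (ε : Dir d) : Site d := if ε.2 then unitVec d ε.1 else -unitVec d ε.1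

/-- A configuration of rotor stacks `r` (with `r x i` the direction used for the
`(i+1)`-st visit to `x`) has discrepancy at most `D` if for every site, direction and `m ≥ 1`,
among the first `m` rotors of the stack each direction occurs `m/(2d)` times up to error `D`. -/
def HasDiscrepancy (d : ℕ) (D : ℝ) (r : Site d → ℕ → Dir d) : Prop :=
  ∀ (x : Site d) (ε : Dir d) (m : ℕ), 1 ≤ m →
    |(({i | i < m ∧ r x i = ε} : Set ℕ).ncard : ℝ) - (m : ℝ) / (2 * (d : ℝ))| ≤ D

/-- One step of rotor-router walk on a state (current position, visit counts so far):
the particle at `p` being visited for the `(c p + 1)`-st time moves in direction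
`r p (c p)` and the visit count at `p` increases by one. -/
def rstep {d : ℕ} (r : Site d → ℕ → Dir d) (s : Site d × (Site d → ℕ)) :
    Site d × (Site d → ℕ) :=
  (s.1 + dirVec d (r s.1 (s.2 s.1)), Function.update s.2 s.1 (s.2 s.1 + 1))

/-- The state after `t` steps of rotor-router walk started at the origin with visit counts `c`. -/
def walkState {d : ℕ} (r : Site d → ℕ → Dir d) (c : Site d → ℕ) (t : ℕ) :
    Site d × (Site d → ℕ) :=
  (rstep r)^[t] (0, c)

/-- The number of steps until the rotor-router walk started at the origin
(with carried-over visit counts `c`) first leaves the region `A`. -/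
def exitSteps {d : ℕ} (r : Site d → ℕ → Dir d) (A : Set (Site d)) (c : Site d → ℕ) : ℕ :=
  sInf {t | (walkState r c t).1 ∉ A}

/-- The state of rotor-router aggregation after `n` particles have walked and settled:
`(aggState r n).1` is the occupied region `A_{n+1}`, `(aggState r n).2.1` the accumulated
visit counts, and `(aggState r n).2.2` the total number `T_n` of steps taken so far. -/
def aggState {d : ℕ} (r : Site d → ℕ → Dir d) : ℕ → Set (Site d) × (Site d → ℕ) × ℕ
  | 0 => ({0}, fun _ => 0, 0)
  | n + 1 =>
      let s := aggState r n
      let τ := exitSteps r s.1 s.2.1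
      (insert (walkState r s.2.1 τ).1 s.1, (walkState r s.2.1 τ).2, s.2.2 + τ)

/-- The region `A_n` of rotor-router aggregation (for `n ≥ 1`). -/
def aggRegion {d : ℕ} (r : Site d → ℕ → Dir d) (n : ℕ) : Set (Site d) :=
  (aggState r (n - 1)).1

/-- `T_n`, the total number of steps taken by the first `n` particles. -/
def totalSteps {d : ℕ} (r : Site d → ℕ → Dir d) (n : ℕ) : ℕ := (aggState r n).2.2

/-- `A^□ = A + [-1/2,1/2]^d ⊆ ℝ^d`. -/
def box (d : ℕ) (A : Set (Site d)) : Set (EuclideanSpace ℝ (Fin d)) :=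
  {z | ∃ x ∈ A, ∀ i, |z i - (x i : ℝ)| ≤ 1 / 2}

/-- The closed Euclidean ball of unit volume centered at the origin of `ℝ^d`. -/
def unitVolBall (d : ℕ) : Set (EuclideanSpace ℝ (Fin d)) :=
  Metric.closedBall 0 (ballVol d ^ (-(1 : ℝ) / (d : ℝ)))

/-- `A ⊆ ℤ^d` is orthoconvex if every line parallel to a coordinate axis meets `A`
in an interval. -/
def Orthoconvex (d : ℕ) (A : Set (Site d)) : Prop :=
  ∀ x ∈ A, ∀ i : Fin d, ∀ k : ℤ, 0 < k → x + k • unitVec d i ∈ A →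
    ∀ j : ℤ, 0 < j → j < k → x + j • unitVec d i ∈ A

/-- The nonnegative orthant `Q ⊆ ℤ^d`. -/
def orthant (d : ℕ) : Set (Site d) := {x | ∀ i, 0 ≤ x i}

/-- The cube `C(o,r) = {x : ‖x‖_∞ ≤ r}`. -/
def cubeSet (d : ℕ) (r : ℕ) : Set (Site d) := {x | ∀ i, |x i| ≤ (r : ℤ)}

/-- The boundary `∂C(o,r) = {x : ‖x‖_∞ = r + 1 and x ∼ y for some y ∈ C(o,r)}`. -/
def cubeBdry (d : ℕ) (r : ℕ) : Set (Site d) :=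
  {x | (∀ i, |x i| ≤ (r : ℤ) + 1) ∧ (∃ i, |x i| = (r : ℤ) + 1) ∧ ∃ y ∈ cubeSet d r, Adj x y}

/-- Characterization of `h_r(x) = P_x(T_Q > T_{∂C(o,r)})`: it vanishes on
`Q ∩ (C(o,r) ∪ ∂C(o,r))`, equals `1` on `∂C(o,r) ∖ Q`, is discrete harmonic on
`C(o,r) ∖ Q`, and (as a normalization) vanishes off `C(o,r) ∪ ∂C(o,r)`. -/
def IsOrthHarm (d : ℕ) (r : ℕ) (h : Site d → ℝ) : Prop :=
  (∀ x, x ∉ cubeSet d r ∪ cubeBdry d r → h x = 0) ∧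
  (∀ x ∈ orthant d ∩ (cubeSet d r ∪ cubeBdry d r), h x = 0) ∧
  (∀ x ∈ cubeBdry d r \ orthant d, h x = 1) ∧
  (∀ x ∈ cubeSet d r \ orthant d,
    h x = (1 / (2 * (d : ℝ))) * ∑ i, (h (x + unitVec d i) + h (x - unitVec d i)))

/-- The function `h_r` of the previous characterization. -/
def orthHarm (d : ℕ) (r : ℕ) : Site d → ℝ :=
  if h : ∃ f, IsOrthHarm d r f then h.choose else 0

/-- `p(k,r) = sup {h_r(x) : ‖x‖_∞ ≤ k}`. -/
def pkr (d k r : ℕ) : ℝ :=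
  sSup {t | ∃ x : Site d, (∀ i, |x i| ≤ (k : ℤ)) ∧ t = orthHarm d r x}

/-- The exponent `γ_d` of Theorem 3.1. -/
def gam (d : ℕ) : ℝ :=
  if d = 1 then 1 else if d = 2 then 1 / 3
  else (2 : ℝ) ^ (-(d : ℝ)) / (2 * (d : ℝ) ^ 2 * Real.log 3)


/-- Normalised discrete Laplacian. -/
def lap {d : ℕ} (f : Site d → ℝ) (x : Site d) : ℝ :=
  (1 / (2 * (d : ℝ))) * (∑ i, (f (x + unitVec d i) + f (x - unitVec d i))) - f x

lemma max_principle {d : ℕ} (hd : 1 ≤ d) (A : Finset (Site d)) (f : Site d → ℝ)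
    (hout : ∀ x, x ∉ A → f x ≤ 0) (hin : ∀ x ∈ A, 0 ≤ lap f x) (x : Site d) : f x ≤ 0 := by
  by_contra hx
  push Not at hx
  have hxA : x ∈ A := by
    by_contra h; exact absurd (hout x h) (not_le.mpr hx)
  obtain ⟨z, hzA, hz⟩ := A.exists_max_image f ⟨x, hxA⟩
  have hMpos : 0 < f z := lt_of_lt_of_le hx (hz x hxA)
  have hall : ∀ y, f y ≤ f z := fun y => by
    by_cases hy : y ∈ A
    · exact hz y hy
    · exact (hout y hy).trans hMpos.le
  let i0 : Fin d := ⟨0, hd⟩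
  obtain ⟨w, hwB, hw⟩ := (A.filter (fun y => f y = f z)).exists_max_image (fun y => y i0)
    ⟨z, by simp [hzA]⟩
  rw [Finset.mem_filter] at hwB
  have hl := hin w hwB.1
  have hdpos : (0 : ℝ) < d := by exact_mod_cast hd
  have hsum : ∑ i : Fin d, ((f z - f (w + unitVec d i)) + (f z - f (w - unitVec d i))) ≤ 0 := by
    have : ∑ i : Fin d, ((f z - f (w + unitVec d i)) + (f z - f (w - unitVec d i)))
        = 2 * d * f z - ∑ i, (f (w + unitVec d i) + f (w - unitVec d i)) := by
      simp only [Finset.sum_add_distrib, Finset.sum_sub_distrib]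
      simp; ring
    rw [this]
    unfold lap at hl
    rw [hwB.2] at hl
    have h2 : f z ≤ 1 / (2 * (d : ℝ)) * ∑ i, (f (w + unitVec d i) + f (w - unitVec d i)) := by
      linarith
    rw [one_div, inv_mul_eq_div, le_div_iff₀ (by positivity)] at h2
    linarith
  have hterm := Finset.single_le_sum (s := Finset.univ) (a := i0)
    (f := fun i : Fin d => ((f z - f (w + unitVec d i)) + (f z - f (w - unitVec d i))))
    (fun i _ => by have h1 := hall (w + unitVec d i); have h2 := hall (w - unitVec d i); linarith)
    (Finset.mem_univ _)
  have heq : f (w + unitVec d i0) = f z := by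
    have h1 := hall (w + unitVec d i0)
    have h2 := hall (w - unitVec d i0)
    linarith
  have hmem : w + unitVec d i0 ∈ A := by
    by_contra h
    have := hout _ h
    linarith
  have := hw (w + unitVec d i0) (by simp [hmem, heq])
  simp [unitVec] at this

lemma lap_add {d : ℕ} (f g : Site d → ℝ) (x : Site d) : lap (fun y => f y + g y) x = lap f x + lap g x := by
  simp only [lap, Finset.sum_add_distrib]; ring

lemma lap_smul {d : ℕ} (c : ℝ) (f : Site d → ℝ) (x : Site d) :
    lap (fun y => c * f y) x = c * lap f x := by
  simp only [lap, ← mul_add, ← Finset.mul_sum]; ring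

lemma lap_sub {d : ℕ} (f g : Site d → ℝ) (x : Site d) : lap (fun y => f y - g y) x = lap f x - lap g x := by
  have := lap_add f (fun y => (-1) * g y) x
  rw [lap_smul] at this
  have h2 : (fun y => f y + (-1) * g y) = fun y => f y - g y := by ext; ring
  rw [h2] at this; linarith

lemma lap_const {d : ℕ} (hd : 1 ≤ d) (c : ℝ) (x : Site d) : lap (fun _ => c) x = 0 := by
  have hdpos : (0 : ℝ) < d := by exact_mod_cast hd
  simp [lap]; field_simp; ring

lemma comparison {d : ℕ} (hd : 1 ≤ d) (A : Finset (Site d)) (f g : Site d → ℝ)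
    (hout : ∀ x, x ∉ A → f x ≤ g x) (hin : ∀ x ∈ A, lap g x ≤ lap f x) (x : Site d) :
    f x ≤ g x := by
  have := max_principle hd A (fun y => f y - g y) (fun y hy => by have := hout y hy; linarith)
    (fun y hy => by rw [lap_sub]; have := hin y hy; linarith) x
  linarith

/-- Extension by zero. -/
def ext0 {d : ℕ} (A : Finset (Site d)) (g : A → ℝ) : Site d → ℝ :=
  fun x => if h : x ∈ A then g ⟨x, h⟩ else 0

def lapLin {d : ℕ} (A : Finset (Site d)) : (A → ℝ) →ₗ[ℝ] (A → ℝ) where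
  toFun g := fun x => lap (ext0 A g) x
  map_add' g h := by
    ext x
    have : ext0 A (g + h) = fun y => ext0 A g y + ext0 A h y := by
      ext y; simp only [ext0]; split_ifs <;> simp
    simp [this, lap_add]
  map_smul' c g := by
    ext x
    have : ext0 A (c • g) = fun y => c * ext0 A g y := by
      ext y; simp only [ext0]; split_ifs <;> simp
    simp [this, lap_smul]

lemma exists_exit {d : ℕ} (hd : 1 ≤ d) (A : Finset (Site d)) :
    ∃ e, IsExitFun d (A : Set (Site d)) e := by
  have hinj : Function.Injective (lapLin A) := by
    rw [injective_iff_map_eq_zero]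
    intro g hg
    have h0 : ∀ x ∈ A, lap (ext0 A g) x = 0 := fun x hx => congrFun hg ⟨x, hx⟩
    have hout : ∀ x, x ∉ A → ext0 A g x = 0 := fun x hx => by simp [ext0, hx]
    have h1 := comparison hd A (ext0 A g) (fun _ => 0) (fun x hx => (hout x hx).le)
      (fun x hx => by rw [h0 x hx, lap_const hd])
    have h2 := comparison hd A (fun _ => 0) (ext0 A g) (fun x hx => (hout x hx).ge)
      (fun x hx => by rw [h0 x hx, lap_const hd])
    ext ⟨x, hx⟩
    have := le_antisymm (h1 x) (h2 x)
    simpa [ext0, hx] using this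
  obtain ⟨g, hg⟩ := (LinearMap.injective_iff_surjective.mp hinj) (fun _ => -1)
  refine ⟨ext0 A g, fun x hx => ?_, fun x hx => ?_⟩
  · have : x ∉ A := by simpa using hx
    simp [ext0, this]
  · exact congrFun hg ⟨x, by simpa using hx⟩

lemma exit_spec {d : ℕ} (hd : 1 ≤ d) (A : Finset (Site d)) :
    IsExitFun d (A : Set (Site d)) (exitFun d A) := by
  have h := exists_exit hd A
  rw [exitFun, dif_pos h]
  exact h.choose_spec

lemma exit_out {d : ℕ} (hd : 1 ≤ d) (A : Finset (Site d)) (x : Site d) (hx : x ∉ A) :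
    exitFun d A x = 0 := (exit_spec hd A).1 x (by simpa using hx)

lemma exit_lap {d : ℕ} (hd : 1 ≤ d) (A : Finset (Site d)) (x : Site d) (hx : x ∈ A) :
    lap (exitFun d A) x = -1 := (exit_spec hd A).2 x (by simpa using hx)

lemma exit_nonneg {d : ℕ} (hd : 1 ≤ d) (A : Finset (Site d)) (x : Site d) :
    0 ≤ exitFun d A x :=
  comparison hd A (fun _ => 0) _ (fun x hx => (exit_out hd A x hx).ge)
    (fun x hx => by rw [exit_lap hd A x hx, lap_const hd]; norm_num) x

lemma exit_bdd {d : ℕ} (hd : 1 ≤ d) (A : Finset (Site d)) :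
    BddAbove (Set.range (exitFun d (A : Set (Site d)))) := by
  refine ⟨∑ y ∈ A, exitFun d A y, ?_⟩
  rintro _ ⟨x, rfl⟩
  by_cases hx : x ∈ A
  · exact Finset.single_le_sum (f := exitFun d A) (fun y _ => exit_nonneg hd A y) hx
  · rw [exit_out hd A x hx]; exact Finset.sum_nonneg (fun y _ => exit_nonneg hd A y)

lemma exit_le_ebar {d : ℕ} (hd : 1 ≤ d) (A : Finset (Site d)) (x : Site d) :
    exitFun d A x ≤ ebar d A := le_csSup (exit_bdd hd A) ⟨x, rfl⟩

lemma ebar_nonneg {d : ℕ} (hd : 1 ≤ d) (A : Finset (Site d)) : 0 ≤ ebar d A :=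
  (exit_nonneg hd A 0).trans (exit_le_ebar hd A 0)

lemma ebar_le {d : ℕ} (A : Finset (Site d)) (c : ℝ) (h : ∀ x, exitFun d A x ≤ c) :
    ebar d A ≤ c := by
  apply csSup_le (Set.range_nonempty _)
  rintro _ ⟨x, rfl⟩; exact h x

lemma ebar_mono {d : ℕ} (hd : 1 ≤ d) (A B : Finset (Site d)) (h : A ⊆ B) :
    ebar d A ≤ ebar d B := by
  apply ebar_le
  intro x
  refine (comparison hd A _ (exitFun d B) (fun y hy => ?_) (fun y hy => ?_) x).trans
    (exit_le_ebar hd B x)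
  · rw [exit_out hd A y hy]; exact exit_nonneg hd B y
  · rw [exit_lap hd A y hy, exit_lap hd B y (h hy)]

lemma ebar_level {d : ℕ} (hd : 1 ≤ d) (A : Finset (Site d)) (t : ℝ) (ht : 0 ≤ t) :
    ebar d A ≤ t + ebar d ((A.filter (fun y => t < exitFun d A y) : Finset (Site d))) := by
  apply ebar_le
  intro x
  set B := A.filter (fun y => t < exitFun d A y) with hB
  have := comparison hd B (fun y => exitFun d A y - t) (exitFun d B) (fun y hy => ?_)
    (fun y hy => ?_) x
  · have h2 := exit_le_ebar hd B x
    linarith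
  · rw [exit_out hd B y hy]
    by_cases hyA : y ∈ A
    · have : ¬ t < exitFun d A y := fun h => hy (by simp [hB, hyA, h])
      linarith
    · have := exit_out hd A y hyA
      linarith
  · have hyA : y ∈ A := (Finset.mem_filter.mp hy).1
    rw [exit_lap hd B y hy, lap_sub, lap_const hd, exit_lap hd A y hyA]; norm_num

section energy
variable {d : ℕ}

/-- Squared l2-distance between `f` and its translate. -/
def Qv (f : Site d → ℝ) (v : Site d) : ℝ := ∑' x, (f (x + v) - f x) ^ 2

lemma Qv_nonneg (f : Site d → ℝ) (v : Site d) : 0 ≤ Qv f v := tsum_nonneg fun _ => sq_nonneg _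

lemma shift_zero {A : Finset (Site d)} {f : Site d → ℝ} (hf : ∀ x, x ∉ A → f x = 0) (v : Site d)
    (x : Site d) (hx : x ∉ A.image (fun y => y - v)) : f (x + v) = 0 := by
  apply hf
  intro h
  exact hx (Finset.mem_image.mpr ⟨x + v, h, by simp⟩)

lemma Qv_add (A : Finset (Site d)) (f : Site d → ℝ) (hf : ∀ x, x ∉ A → f x = 0) (v w : Site d) :
    √(Qv f (v + w)) ≤ √(Qv f v) + √(Qv f w) := by
  have h1 : Qv f v = ∑' x, (f (x + w + v) - f (x + w)) ^ 2 :=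
    ((Equiv.addRight w).tsum_eq (fun x => (f (x + v) - f x) ^ 2)).symm
  set s : Finset (Site d) := A ∪ A.image (fun y => y - w) ∪ A.image (fun y => y - (w + v)) with hs
  have hz : ∀ x, x ∉ s → f x = 0 ∧ f (x + w) = 0 ∧ f (x + w + v) = 0 := by
    intro x hx
    simp only [hs, Finset.mem_union, not_or] at hx
    refine ⟨hf x hx.1.1, shift_zero hf w x hx.1.2, ?_⟩
    rw [add_assoc]; exact shift_zero hf _ x hx.2
  have e1 : Qv f v = ∑ x ∈ s, (f (x + w + v) - f (x + w)) ^ 2 := by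
    rw [h1]; exact tsum_eq_sum fun x hx => by simp [hz x hx]
  have e2 : Qv f w = ∑ x ∈ s, (f (x + w) - f x) ^ 2 :=
    tsum_eq_sum fun x hx => by simp [hz x hx]
  have e3 : Qv f (v + w) = ∑ x ∈ s, (f (x + w + v) - f x) ^ 2 := by
    unfold Qv
    rw [tsum_eq_sum (s := s)]
    · refine Finset.sum_congr rfl fun x _ => ?_
      rw [add_comm v w, add_assoc]
    · intro x hx
      rw [add_comm v w, ← add_assoc]; simp [hz x hx]
  have hc := Finset.sum_mul_sq_le_sq_mul_sq s (fun x => f (x + w + v) - f (x + w))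
    (fun x => f (x + w) - f x)
  rw [← e1, ← e2] at hc
  have hc2 : ∑ x ∈ s, (f (x + w + v) - f (x + w)) * (f (x + w) - f x) ≤ √(Qv f v) * √(Qv f w) := by
    rw [← Real.sqrt_mul (Qv_nonneg f v)]
    exact Real.le_sqrt_of_sq_le hc
  rw [Real.sqrt_le_left (by positivity)]
  have e4 : Qv f (v + w) = Qv f v + Qv f w
      + 2 * ∑ x ∈ s, (f (x + w + v) - f (x + w)) * (f (x + w) - f x) := by
    rw [e1, e2, e3, Finset.mul_sum, ← Finset.sum_add_distrib, ← Finset.sum_add_distrib]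
    exact Finset.sum_congr rfl fun x _ => by ring
  rw [e4, add_sq, Real.sq_sqrt (Qv_nonneg f v), Real.sq_sqrt (Qv_nonneg f w)]
  linarith

lemma Qv_zero (f : Site d → ℝ) : Qv f 0 = 0 := by simp [Qv]

lemma Qv_nsmul (A : Finset (Site d)) (f : Site d → ℝ) (hf : ∀ x, x ∉ A → f x = 0) (v : Site d)
    (k : ℕ) : √(Qv f (k • v)) ≤ k * √(Qv f v) := by
  induction k with
  | zero => simp [Qv_zero]
  | succ k ih =>
    rw [succ_nsmul]
    refine (Qv_add A f hf _ _).trans ?_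
    push_cast; linarith

/-- Dirichlet energy. -/
def En (f : Site d → ℝ) : ℝ := ∑ i, Qv f (unitVec d i)

lemma En_nonneg (f : Site d → ℝ) : 0 ≤ En f := Finset.sum_nonneg fun _ _ => Qv_nonneg _ _

lemma Qv_box (A : Finset (Site d)) (f : Site d → ℝ) (hf : ∀ x, x ∉ A → f x = 0) (L : ℕ)
    (v : Fin d → Fin L) : Qv f (fun i => ((v i : ℕ) : ℤ)) ≤ (d * L) ^ 2 * En f := by
  have h1 : (fun i => ((v i : ℕ) : ℤ)) = ∑ i, (v i : ℕ) • unitVec d i := by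
    ext j
    simp [unitVec]
  have h2 : √(Qv f (∑ i, (v i : ℕ) • unitVec d i)) ≤ ∑ i, √(Qv f ((v i : ℕ) • unitVec d i)) :=
    Finset.le_sum_of_subadditive (fun v => √(Qv f v)) (by simp [Qv_zero])
      (fun x y => Qv_add A f hf x y) _ _
  have h3 : ∑ i, √(Qv f ((v i : ℕ) • unitVec d i)) ≤ ∑ i : Fin d, (L : ℝ) * √(En f) := by
    refine Finset.sum_le_sum fun i _ => (Qv_nsmul A f hf _ _).trans ?_
    gcongr
    · exact (v i).isLt.le
    · exact Finset.single_le_sum (f := fun i => Qv f (unitVec d i))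
        (fun _ _ => Qv_nonneg _ _) (Finset.mem_univ i)
  rw [h1]
  have h4 : √(Qv f (∑ i, (v i : ℕ) • unitVec d i)) ≤ d * L * √(En f) := by
    refine (h2.trans h3).trans (le_of_eq ?_)
    simp; ring
  have h5 := (Real.sqrt_le_left (by positivity)).mp h4
  rwa [mul_pow, Real.sq_sqrt (En_nonneg f)] at h5

lemma Qv_expand (A : Finset (Site d)) (f : Site d → ℝ) (hf : ∀ x, x ∉ A → f x = 0) (v : Site d) :
    Qv f v = 2 * ∑ x ∈ A, f x ^ 2 - 2 * ∑ x ∈ A, f x * f (x + v) := by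
  set s : Finset (Site d) := A ∪ A.image (fun y => y - v) with hs
  have e1 : Qv f v = ∑ x ∈ s, (f (x + v) - f x) ^ 2 := by
    refine tsum_eq_sum fun x hx => ?_
    simp only [hs, Finset.mem_union, not_or] at hx
    simp [hf x hx.1, shift_zero hf v x hx.2]
  have e2 : ∑ x ∈ A, f x ^ 2 = ∑ x ∈ s, f x ^ 2 :=
    Finset.sum_subset Finset.subset_union_left fun x _ hx => by simp [hf x hx]
  have e3 : ∑ x ∈ A, f x * f (x + v) = ∑ x ∈ s, f x * f (x + v) :=
    Finset.sum_subset Finset.subset_union_left fun x _ hx => by simp [hf x hx]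
  have e4 : ∑ x ∈ A, f x ^ 2 = ∑ x ∈ s, f (x + v) ^ 2 := by
    have : ∑ x ∈ A, f x ^ 2 = ∑ x ∈ A.image (fun y => y - v), f (x + v) ^ 2 := by
      rw [Finset.sum_image (fun x _ y _ h => by simpa using h)]
      simp
    rw [this]
    exact Finset.sum_subset Finset.subset_union_right fun x _ hx => by
      simp [shift_zero hf v x hx]
  have : 2 * ∑ x ∈ A, f x ^ 2 = ∑ x ∈ s, f x ^ 2 + ∑ x ∈ s, f (x + v) ^ 2 := by
    rw [← e2, ← e4]; ring
  rw [this, e1, e3, Finset.mul_sum, ← Finset.sum_add_distrib, ← Finset.sum_sub_distrib]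
  exact Finset.sum_congr rfl fun x _ => by ring

lemma faber_krahn (A : Finset (Site d)) (f : Site d → ℝ) (hf : ∀ x, x ∉ A → f x = 0)
    (hf0 : ∀ x, 0 ≤ f x) (L : ℕ) (hL : 2 * A.card ≤ L ^ d) (hL0 : 0 < L) :
    ∑ x ∈ A, f x ^ 2 ≤ (d * L) ^ 2 * En f := by
  have hsum : ∑ v : Fin d → Fin L, Qv f (fun i => ((v i : ℕ) : ℤ))
      ≤ L ^ d * ((d * L) ^ 2 * En f) := by
    refine (Finset.sum_le_sum fun v _ => Qv_box A f hf L v).trans (le_of_eq ?_)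
    simp
  have hcross : ∑ v : Fin d → Fin L, ∑ x ∈ A, f x * f (x + fun i => ((v i : ℕ) : ℤ))
      ≤ A.card * ∑ x ∈ A, f x ^ 2 := by
    rw [Finset.sum_comm]
    have : ∀ x ∈ A, ∑ v : Fin d → Fin L, f x * f (x + fun i => ((v i : ℕ) : ℤ))
        ≤ f x * ∑ y ∈ A, f y := by
      intro x _
      rw [← Finset.mul_sum]
      refine mul_le_mul_of_nonneg_left ?_ (hf0 x)
      have hinj : Set.InjOn (fun v : Fin d → Fin L => x + fun i => ((v i : ℕ) : ℤ))
          (Finset.univ : Finset (Fin d → Fin L)) := by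
        intro v _ w _ h
        ext i
        have := congrFun h i
        simpa using this
      rw [← Finset.sum_image (f := f) hinj]
      set I := Finset.univ.image (fun v : Fin d → Fin L => x + fun i => ((v i : ℕ) : ℤ))
      have h1 : ∑ y ∈ I, f y ≤ ∑ y ∈ I ∪ A, f y :=
        Finset.sum_le_sum_of_subset_of_nonneg Finset.subset_union_left fun y _ _ => hf0 y
      have h2 : ∑ y ∈ A, f y = ∑ y ∈ I ∪ A, f y :=
        Finset.sum_subset Finset.subset_union_right fun y _ hy => hf y hy
      rw [h2]; exact h1
    refine (Finset.sum_le_sum this).trans ?_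
    rw [← Finset.sum_mul, ← sq]
    exact sq_sum_le_card_mul_sum_sq
  have hexp : ∑ v : Fin d → Fin L, Qv f (fun i => ((v i : ℕ) : ℤ))
      = 2 * L ^ d * ∑ x ∈ A, f x ^ 2
        - 2 * ∑ v : Fin d → Fin L, ∑ x ∈ A, f x * f (x + fun i => ((v i : ℕ) : ℤ)) := by
    simp_rw [Qv_expand A f hf]
    rw [Finset.sum_sub_distrib, Finset.mul_sum (s := Finset.univ)]
    simp; ring
  have hS : 0 ≤ ∑ x ∈ A, f x ^ 2 := Finset.sum_nonneg fun _ _ => sq_nonneg _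
  have hL' : 2 * (A.card : ℝ) ≤ (L : ℝ) ^ d := by exact_mod_cast hL
  have hpos : (0 : ℝ) < (L : ℝ) ^ d := by positivity
  have h9 : (L : ℝ) ^ d * ∑ x ∈ A, f x ^ 2 ≤ L ^ d * ((d * L) ^ 2 * En f) := by
    have := mul_le_mul_of_nonneg_right hL' hS
    nlinarith
  exact le_of_mul_le_mul_left h9 hpos

lemma ip_symm (A : Finset (Site d)) (f : Site d → ℝ) (hf : ∀ x, x ∉ A → f x = 0) (v : Site d) :
    ∑ x ∈ A, f x * f (x - v) = ∑ x ∈ A, f x * f (x + v) := by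
  have h1 := Qv_expand A f hf v
  have h2 := Qv_expand A f hf (-v)
  have h3 : Qv f (-v) = Qv f v := by
    unfold Qv
    rw [← (Equiv.addRight v).tsum_eq]
    refine tsum_congr fun x => ?_
    simp; ring
  simp only [← sub_eq_add_neg] at h2
  linarith

lemma energy_exit (hd : 1 ≤ d) (A : Finset (Site d)) :
    En (exitFun d (A : Set (Site d))) = 2 * d * ∑ x ∈ A, exitFun d A x := by
  set e := exitFun d (A : Set (Site d)) with he
  have hf : ∀ x, x ∉ A → e x = 0 := exit_out hd A
  have hdpos : (0 : ℝ) < d := by exact_mod_cast hd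
  have h1 : ∀ x ∈ A, 2 * d * e x
      = 2 * d * e x ^ 2 - ∑ i, (e x * e (x + unitVec d i) + e x * e (x - unitVec d i)) := by
    intro x hx
    have := exit_lap hd A x hx
    rw [← he] at this
    unfold lap at this
    have h2 : ∑ i, (e (x + unitVec d i) + e (x - unitVec d i)) = 2 * d * (e x - 1) := by
      field_simp at this
      linarith
    simp_rw [← mul_add]
    rw [← Finset.mul_sum, h2]; ring
  rw [Finset.mul_sum, Finset.sum_congr rfl h1, Finset.sum_sub_distrib, Finset.sum_comm]
  simp_rw [Finset.sum_add_distrib, ip_symm A e hf, En, Qv_expand A e hf]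
  rw [Finset.sum_sub_distrib, ← Finset.mul_sum, ← Finset.mul_sum,
    show ∑ x ∈ A, 2 * (d : ℝ) * e x ^ 2 = 2 * d * ∑ x ∈ A, e x ^ 2 from (Finset.mul_sum ..).symm]
  simp; ring

lemma sum_exit_le (hd : 1 ≤ d) (A : Finset (Site d)) (q : ℝ) (hq : 1 ≤ q)
    (hqd : (A.card : ℝ) ≤ q ^ d) :
    ∑ x ∈ A, exitFun d A x ≤ 18 * d ^ 3 * (A.card * q ^ 2) := by
  set e := exitFun d (A : Set (Site d)) with he
  set S := ∑ x ∈ A, e x with hS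
  have hS0 : 0 ≤ S := Finset.sum_nonneg fun x _ => exit_nonneg hd A x
  set L := ⌈2 * q⌉₊ with hL
  have hLq : 2 * q ≤ L := Nat.le_ceil _
  have hLq' : (L : ℝ) ≤ 3 * q := by
    have := (Nat.ceil_lt_add_one (show 0 ≤ 2 * q by linarith)).le
    linarith
  have hL0 : 0 < L := by
    have : (0 : ℝ) < L := by linarith
    exact_mod_cast this
  have hLd : 2 * A.card ≤ L ^ d := by
    have h1 : (2 * q) ^ d ≤ (L : ℝ) ^ d := by gcongr
    rw [mul_pow] at h1
    have h2 : (2 : ℝ) ≤ 2 ^ d := by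
      calc (2 : ℝ) = 2 ^ 1 := by norm_num
        _ ≤ 2 ^ d := pow_le_pow_right₀ (by norm_num) hd
    have h3 : (2 : ℝ) * A.card ≤ L ^ d :=
      (mul_le_mul h2 hqd (by positivity) (by positivity)).trans h1
    exact_mod_cast h3
  have h1 := faber_krahn A e (exit_out hd A) (exit_nonneg hd A) L hLd hL0
  rw [energy_exit hd A, ← he, ← hS] at h1
  have h2 : S ^ 2 ≤ A.card * ∑ x ∈ A, e x ^ 2 := sq_sum_le_card_mul_sum_sq
  have h3 : (d * L : ℝ) ^ 2 ≤ (d * (3 * q)) ^ 2 := by gcongr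
  have h4 : S ^ 2 ≤ A.card * ((d * (3 * q)) ^ 2 * (2 * d * S)) := by
    refine h2.trans (mul_le_mul_of_nonneg_left (h1.trans ?_) (by positivity))
    exact mul_le_mul_of_nonneg_right h3 (by positivity)
  rcases hS0.eq_or_lt with h0 | h0
  · rw [← h0]; positivity
  · have : S * S ≤ (18 * d ^ 3 * (A.card * q ^ 2)) * S := by nlinarith
    exact le_of_mul_le_mul_right this h0

lemma ebar_bound (hd : 1 ≤ d) : ∃ K : ℝ, 0 ≤ K ∧ ∀ A : Finset (Site d),
    ebar d (A : Set (Site d)) ≤ K * (A.card : ℝ) ^ (2 / (d : ℝ)) := by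
  have hdpos : (0 : ℝ) < d := by exact_mod_cast hd
  set b : ℝ := (1 / 2 : ℝ) ^ (2 / (d : ℝ)) with hb
  have hb1 : b < 1 := Real.rpow_lt_one (by norm_num) (by norm_num) (by positivity)
  set K : ℝ := 36 * d ^ 3 / (1 - b) with hK
  have hK0 : 0 ≤ K := by
    have : 0 < 1 - b := by linarith
    positivity
  have hKe : 36 * d ^ 3 + K * b = K := by
    have : 1 - b ≠ 0 := by linarith
    rw [hK]; field_simp; ring
  refine ⟨K, hK0, ?_⟩
  intro A
  induction hn : A.card using Nat.strong_induction_on generalizing A with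
  | _ n ih =>
  rcases Nat.eq_zero_or_pos n with h0 | h0
  · have hA : A = ∅ := Finset.card_eq_zero.mp (hn.trans h0)
    subst hA
    have : ebar d ((∅ : Finset (Site d)) : Set (Site d)) ≤ 0 :=
      ebar_le _ _ fun x => (exit_out hd ∅ x (by simp)).le
    exact this.trans (by positivity)
  have hn1 : (1 : ℝ) ≤ n := by exact_mod_cast h0
  set q : ℝ := (n : ℝ) ^ (1 / (d : ℝ)) with hq
  have hq1 : 1 ≤ q := Real.one_le_rpow hn1 (by positivity)
  have hqd : q ^ d = n := by
    rw [hq, ← Real.rpow_natCast, ← Real.rpow_mul (by positivity)]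
    field_simp; simp
  have hq2 : q ^ 2 = (n : ℝ) ^ (2 / (d : ℝ)) := by
    rw [hq, ← Real.rpow_natCast, ← Real.rpow_mul (by positivity)]
    congr 1; push_cast; ring
  have hS := sum_exit_le hd A q hq1 (by rw [hn, hqd])
  rw [hn] at hS
  set t : ℝ := 36 * d ^ 3 * q ^ 2 with ht
  have ht0 : 0 < t := by positivity
  set B := A.filter (fun y => t < exitFun d A y) with hB
  have hBt : (B.card : ℝ) * t ≤ ∑ x ∈ A, exitFun d A x := by
    calc (B.card : ℝ) * t = ∑ x ∈ B, t := by simp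
      _ ≤ ∑ x ∈ B, exitFun d A x :=
        Finset.sum_le_sum fun x hx => ((Finset.mem_filter.mp hx).2).le
      _ ≤ _ := Finset.sum_le_sum_of_subset_of_nonneg (Finset.filter_subset _ _)
        fun x _ _ => exit_nonneg hd A x
  have hBn : (B.card : ℝ) ≤ 1 / 2 * n := by
    have : (B.card : ℝ) * t ≤ (1 / 2 * n) * t := by
      refine (hBt.trans hS).trans (le_of_eq ?_)
      rw [ht]; ring
    exact le_of_mul_le_mul_right this ht0
  have hlt : B.card < n := by
    have : (B.card : ℝ) < n := by linarith
    exact_mod_cast this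
  have h1 := ebar_level hd A t ht0.le
  have h2 := ih B.card hlt B rfl
  have h3 : (B.card : ℝ) ^ (2 / (d : ℝ)) ≤ b * q ^ 2 := by
    rw [hq2, hb, ← Real.mul_rpow (by norm_num) (by positivity)]
    exact Real.rpow_le_rpow (by positivity) hBn (by positivity)
  rw [← hq2]
  calc _ ≤ _ := h1
    _ ≤ t + K * (b * q ^ 2) := by
        have := mul_le_mul_of_nonneg_left h3 hK0
        linarith
    _ = (36 * d ^ 3 + K * b) * q ^ 2 := by rw [ht]; ring
    _ = K * q ^ 2 := by rw [hKe]

lemma grad_sum_le (hd : 1 ≤ d) (A : Finset (Site d)) :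
    ∑ x ∈ A, ∑ ε : Dir d, |exitFun d A (x + dirVec d ε) - exitFun d A x|
      ≤ √((2 * d * A.card) * (2 * (2 * d * ∑ x ∈ A, exitFun d A x))) := by
  set e := exitFun d (A : Set (Site d)) with he
  have hf : ∀ x, x ∉ A → e x = 0 := exit_out hd A
  apply Real.le_sqrt_of_sq_le
  have hfin : ∀ v : Site d, ∑ x ∈ A, (e (x + v) - e x) ^ 2 ≤ Qv e v := by
    intro v
    refine Summable.sum_le_tsum A (fun _ _ => sq_nonneg _) ?_
    apply summable_of_ne_finset_zero (s := A ∪ A.image (fun y => y - v))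
    intro x hx
    simp only [Finset.mem_union, not_or] at hx
    simp [hf x hx.1, shift_zero hf v x hx.2]
  have hneg : ∀ v : Site d, Qv e (-v) = Qv e v := by
    intro v
    rw [Qv_expand A e hf, Qv_expand A e hf]
    simp only [← sub_eq_add_neg, ip_symm A e hf]
  rw [← energy_exit hd A, ← he, ← Finset.sum_product']
  refine (sq_sum_le_card_mul_sum_sq).trans ?_
  simp only [sq_abs]
  rw [Finset.sum_product, Finset.sum_comm]
  have hcard : ((A ×ˢ (Finset.univ : Finset (Dir d))).card : ℝ) = 2 * d * A.card := by
    simp; ring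
  rw [hcard]
  refine mul_le_mul_of_nonneg_left ?_ (by positivity)
  refine (Finset.sum_le_sum fun ε _ => hfin (dirVec d ε)).trans (le_of_eq ?_)
  rw [Fintype.sum_prod_type]
  simp [dirVec, hneg, En, Finset.mul_sum]
  refine Finset.sum_congr rfl fun i _ => by ring

end energy

section rotor
variable {d : ℕ}

/-- Accumulated increments of `f` by the first `m` rotors at `x`. -/
def Fr (r : Site d → ℕ → Dir d) (f : Site d → ℝ) (x : Site d) (m : ℕ) : ℝ :=
  ∑ i ∈ Finset.range m, (f (x + dirVec d (r x i)) - f x)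

lemma walk_succ (r : Site d → ℕ → Dir d) (c : Site d → ℕ) (t : ℕ) :
    walkState r c (t + 1) = rstep r (walkState r c t) := by
  simp [walkState, Function.iterate_succ_apply']

lemma walk_inv (r : Site d → ℕ → Dir d) (c : Site d → ℕ) (S : Finset (Site d)) (f : Site d → ℝ)
    (t : ℕ) (h : ∀ s < t, (walkState r c s).1 ∈ S) :
    f (walkState r c t).1 + ∑ x ∈ S, Fr r f x (c x)
      = f 0 + ∑ x ∈ S, Fr r f x ((walkState r c t).2 x)
    ∧ ∀ x, x ∉ S → (walkState r c t).2 x = c x := by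
  induction t with
  | zero => simp [walkState]
  | succ t ih =>
    obtain ⟨ih1, ih2⟩ := ih fun s hs => h s (hs.trans (Nat.lt_succ_self t))
    have hp := h t (Nat.lt_succ_self t)
    rw [walk_succ]
    set s := walkState r c t with hs
    constructor
    · have h1 : ∑ x ∈ S, Fr r f x ((rstep r s).2 x)
          = ∑ x ∈ S, Fr r f x (s.2 x) + (f (rstep r s).1 - f s.1) := by
        rw [← Finset.add_sum_erase S _ hp, ← Finset.add_sum_erase S (fun x => Fr r f x (s.2 x)) hp]
        have h2 : ∑ x ∈ S.erase s.1, Fr r f x ((rstep r s).2 x)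
            = ∑ x ∈ S.erase s.1, Fr r f x (s.2 x) := by
          refine Finset.sum_congr rfl fun x hx => ?_
          have : x ≠ s.1 := (Finset.mem_erase.mp hx).1
          simp [rstep, Function.update_of_ne this]
        rw [h2]
        simp only [rstep, Function.update_self]
        simp only [Fr, Finset.sum_range_succ]
        ring
      rw [h1]; linarith
    · intro x hx
      have : x ≠ s.1 := fun h => hx (h ▸ hp)
      simp [rstep, Function.update_of_ne this, ih2 x hx]

lemma dirVec_abs (ε : Dir d) (i : Fin d) : |dirVec d ε i| ≤ 1 := by
  unfold dirVec unitVec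
  split_ifs <;> simp <;> split_ifs <;> simp

lemma agg_inv (r : Site d → ℕ → Dir d) (n : ℕ) :
    ∃ A : Finset (Site d), (aggState r n).1 = ↑A ∧ (0 : Site d) ∈ A ∧ A.card ≤ n + 1
      ∧ (∀ x ∈ A, ∀ i, |x i| ≤ (n : ℤ)) ∧ (∀ x, x ∉ A → (aggState r n).2.1 x = 0)
      ∧ ∀ f : Site d → ℝ, ∑ x ∈ A, (f x - f 0) = ∑ x ∈ A, Fr r f x ((aggState r n).2.1 x) := by
  induction n with
  | zero =>
    refine ⟨{0}, by simp [aggState], by simp, by simp, by simp, by simp [aggState], ?_⟩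
    intro f
    simp [aggState, Fr]
  | succ n ih =>
    obtain ⟨A, hA, h0, hc, hb, hz, hf⟩ := ih
    set c := (aggState r n).2.1 with hcdef
    set τ := exitSteps r (aggState r n).1 c with hτ
    have e1 : (aggState r (n + 1)).1 = insert (walkState r c τ).1 (aggState r n).1 := rfl
    have e2 : (aggState r (n + 1)).2.1 = (walkState r c τ).2 := rfl
    rw [e1, e2]
    have hbefore : ∀ s < τ, (walkState r c s).1 ∈ A := by
      intro s hs
      have := Nat.notMem_of_lt_sInf hs
      simpa [hA] using this
    by_cases hy : (walkState r c τ).1 ∈ A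
    · have hτ0 : τ = 0 := by
        by_contra hne
        have hne' : {t | (walkState r c t).1 ∉ (aggState r n).1}.Nonempty := by
          by_contra hemp
          rw [Set.not_nonempty_iff_eq_empty] at hemp
          apply hne
          rw [hτ, exitSteps, hemp, Nat.sInf_empty]
        have hmem : (walkState r c τ).1 ∉ (aggState r n).1 := Nat.sInf_mem hne'
        exact hmem (by rw [hA]; exact hy)
      have hw : walkState r c τ = (0, c) := by rw [hτ0]; rfl
      rw [hw]
      refine ⟨A, by simp [hA, h0], h0, by omega, fun x hx i => ?_, hz, hf⟩
      have := hb x hx i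
      push_cast; linarith
    · refine ⟨insert (walkState r c τ).1 A, by simp [hA], by simp [h0], ?_, ?_, ?_, ?_⟩
      · exact (Finset.card_insert_le _ _).trans (by omega)
      · intro x hx i
        rcases Finset.mem_insert.mp hx with rfl | hx
        · rcases Nat.eq_zero_or_pos τ with h | h
          · rw [h]; simp [walkState]; positivity
          · obtain ⟨s, hs⟩ := Nat.exists_eq_succ_of_ne_zero h.ne'
            have h1 := hb _ (hbefore s (by omega)) i
            rw [hs, Nat.succ_eq_add_one, walk_succ]
            simp only [rstep, Pi.add_apply]
            refine (abs_add_le _ _).trans ?_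
            have := dirVec_abs (r (walkState r c s).1 ((walkState r c s).2 (walkState r c s).1)) i
            push_cast; linarith
        · have := hb x hx i
          push_cast; linarith
      · intro x hx
        have hxA : x ∉ A := fun h => hx (Finset.mem_insert_of_mem h)
        rw [(walk_inv r c A (fun _ => 0) τ hbefore).2 x hxA, hz x hxA]
      · intro f
        obtain ⟨h1, h2⟩ := walk_inv r c A f τ hbefore
        rw [Finset.sum_insert hy, Finset.sum_insert hy, hf f, h2 _ hy, hz _ hy]
        simp only [Fr, Finset.range_zero, Finset.sum_empty] at h1 ⊢
        linarith

lemma Fr_le (hd : 1 ≤ d) (D : ℝ) (hD : 0 ≤ D) (r : Site d → ℕ → Dir d) (hr : HasDiscrepancy d D r)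
    (f : Site d → ℝ) (x : Site d) (hx : lap f x = 0) (m : ℕ) :
    Fr r f x m ≤ D * ∑ ε : Dir d, |f (x + dirVec d ε) - f x| := by
  have hdpos : (0 : ℝ) < d := by exact_mod_cast hd
  rcases Nat.eq_zero_or_pos m with h0 | h0
  · subst h0
    simp only [Fr, Finset.range_zero, Finset.sum_empty]
    positivity
  have hharm : ∑ ε : Dir d, (f (x + dirVec d ε) - f x) = 0 := by
    unfold lap at hx
    rw [Fintype.sum_prod_type]
    simp only [dirVec, Fintype.univ_bool]
    simp
    simp only [← sub_eq_add_neg, Finset.sum_add_distrib, Finset.sum_sub_distrib] at hx ⊢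
    field_simp at hx
    linarith
  have hN : Fr r f x m = ∑ ε : Dir d,
      (({i | i < m ∧ r x i = ε} : Set ℕ).ncard : ℝ) * (f (x + dirVec d ε) - f x) := by
    unfold Fr
    rw [← Finset.sum_fiberwise (Finset.range m) (fun i => r x i)]
    refine Finset.sum_congr rfl fun ε _ => ?_
    have : ({i | i < m ∧ r x i = ε} : Set ℕ)
        = ((Finset.range m).filter (fun i => r x i = ε) : Finset ℕ) := by
      ext i; simp
    rw [this, Set.ncard_coe_finset, ← nsmul_eq_mul, ← Finset.sum_const]
    refine Finset.sum_congr rfl fun i hi => ?_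
    rw [(Finset.mem_filter.mp hi).2]
  have hN2 : Fr r f x m = ∑ ε : Dir d,
      ((({i | i < m ∧ r x i = ε} : Set ℕ).ncard : ℝ) - (m : ℝ) / (2 * (d : ℝ)))
        * (f (x + dirVec d ε) - f x) := by
    simp only [sub_mul (_ : ℝ) ((m : ℝ) / (2 * (d : ℝ)))]
    rw [Finset.sum_sub_distrib, ← Finset.mul_sum, hharm, hN]
    simp
  rw [hN2, Finset.mul_sum]
  refine Finset.sum_le_sum fun ε _ => ?_
  refine (le_abs_self _).trans ?_
  rw [abs_mul]
  exact mul_le_mul_of_nonneg_right (hr x ε m h0) (abs_nonneg _)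

lemma nsq_step (x : Site d) (ε : Dir d) :
    nsq (x + dirVec d ε) - nsq x = 2 * (if ε.2 then (x ε.1 : ℝ) else - x ε.1) + 1 := by
  unfold nsq
  rw [← Finset.sum_sub_distrib]
  rw [Finset.sum_eq_single ε.1]
  · unfold dirVec unitVec
    split_ifs <;> simp <;> ring
  · intro j _ hj
    unfold dirVec unitVec
    split_ifs <;> simp [hj]
  · simp

lemma lap_nsq (hd : 1 ≤ d) (x : Site d) : lap (nsq (d := d)) x = 1 := by
  have hdpos : (0 : ℝ) < d := by exact_mod_cast hd
  have h : ∀ i, nsq (x + unitVec d i) + nsq (x - unitVec d i) = 2 * nsq x + 2 := by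
    intro i
    have h1 := nsq_step x (i, true)
    have h2 := nsq_step x (i, false)
    simp [dirVec, ← sub_eq_add_neg] at h1 h2
    linarith
  unfold lap
  simp only [h]
  simp
  field_simp
  ring

lemma rotor_main (hd : 1 ≤ d) (D : ℝ) (hD : 0 ≤ D) (r : Site d → ℕ → Dir d)
    (hr : HasDiscrepancy d D r) (n : ℕ) (A : Finset (Site d))
    (hf : ∀ f : Site d → ℝ, ∑ x ∈ A, (f x - f 0) = ∑ x ∈ A, Fr r f x ((aggState r n).2.1 x)) :
    ∑ x ∈ A, nsq x ≤ ∑ x ∈ A, (exitFun d A 0 - exitFun d A x)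
      + D * (4 * ∑ x ∈ A, ∑ i, |(x i : ℝ)| + 2 * d * A.card)
      + D * ∑ x ∈ A, ∑ ε : Dir d, |exitFun d A (x + dirVec d ε) - exitFun d A x| := by
  set e := exitFun d (A : Set (Site d)) with he
  have h1 := hf (fun x => nsq x + e x)
  have hn0 : nsq (0 : Site d) = 0 := by simp [nsq]
  have h2 : ∑ x ∈ A, Fr r (fun x => nsq x + e x) x ((aggState r n).2.1 x)
      ≤ ∑ x ∈ A, D * ((4 * ∑ i, |(x i : ℝ)| + 2 * d)
          + ∑ ε : Dir d, |e (x + dirVec d ε) - e x|) := by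
    refine Finset.sum_le_sum fun x hx => ?_
    refine (Fr_le hd D hD r hr _ x ?_ _).trans ?_
    · rw [lap_add, lap_nsq hd, exit_lap hd A x hx]; norm_num
    · refine mul_le_mul_of_nonneg_left ?_ hD
      have h3 : ∑ ε : Dir d, |nsq (x + dirVec d ε) - nsq x| ≤ 4 * ∑ i, |(x i : ℝ)| + 2 * d := by
        have : ∀ ε : Dir d, |nsq (x + dirVec d ε) - nsq x| ≤ 2 * |(x ε.1 : ℝ)| + 1 := by
          intro ε
          rw [nsq_step]
          refine (abs_add_le _ _).trans ?_
          rw [abs_mul]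
          split_ifs <;> simp
        refine (Finset.sum_le_sum fun ε _ => this ε).trans (le_of_eq ?_)
        rw [Fintype.sum_prod_type]
        simp [Finset.sum_add_distrib, ← Finset.mul_sum]
        ring
      refine le_trans ?_ (add_le_add_left h3 _)
      rw [← Finset.sum_add_distrib]
      refine Finset.sum_le_sum fun ε _ => ?_
      refine le_trans (le_of_eq ?_) (abs_add_le _ _)
      congr 1; ring
  rw [← h1, ← Finset.mul_sum, Finset.sum_add_distrib, Finset.sum_add_distrib, ← Finset.mul_sum]
    at h2
  simp only [hn0, zero_add] at h2
  have h5 : ∑ x ∈ A, (nsq x + e x - e 0) = ∑ x ∈ A, nsq x - ∑ x ∈ A, (e 0 - e x) := by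
    rw [← Finset.sum_sub_distrib]; exact Finset.sum_congr rfl fun x _ => by ring
  rw [h5] at h2
  simp only [Finset.sum_const, nsmul_eq_mul] at h2 
  linarith
end rotor

section counting
variable {d : ℕ}

lemma sort_upper {ι : Type*} (s : Finset ι) (h : ι → ℝ) (m : ℕ → ℝ)
    (H : ∀ x ∈ s, ∀ j, (s.filter (fun y => h y < h x)).card ≤ j → h x ≤ m j) :
    ∑ x ∈ s, h x ≤ ∑ j ∈ Finset.Icc 1 s.card, m j := by
  induction s using Finset.induction_on_max_value h with
  | empty => simp
  | insert a s ha hmax ih =>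
    rw [Finset.sum_insert ha, Finset.card_insert_of_notMem ha,
      Finset.sum_Icc_succ_top (by omega), add_comm]
    refine add_le_add (ih fun x hx j hj => H x (Finset.mem_insert_of_mem hx) j ?_)
      (H a (Finset.mem_insert_self _ _) _ ?_)
    · rw [Finset.filter_insert, if_neg (not_lt.mpr (hmax x hx))]
      exact hj
    · exact (Finset.card_filter_le _ _).trans (Finset.card_insert_le _ _)

lemma sort_lower {ι : Type*} (s : Finset ι) (h : ι → ℝ) (m : ℕ → ℝ)
    (H : ∀ x ∈ s, ∀ j, j ≤ (s.filter (fun y => h y ≤ h x)).card → m j ≤ h x) :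
    ∑ j ∈ Finset.Icc 1 s.card, m j ≤ ∑ x ∈ s, h x := by
  induction s using Finset.induction_on_max_value h with
  | empty => simp
  | insert a s ha hmax ih =>
    rw [Finset.sum_insert ha, Finset.card_insert_of_notMem ha,
      Finset.sum_Icc_succ_top (by omega), add_comm (h a)]
    refine add_le_add (ih fun x hx j hj => H x (Finset.mem_insert_of_mem hx) j ?_)
      (H a (Finset.mem_insert_self _ _) _ ?_)
    · exact hj.trans (Finset.card_le_card (Finset.filter_subset_filter _ (Finset.subset_insert _ _)))
    · rw [Finset.filter_true_of_mem, Finset.card_insert_of_notMem ha]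
      intro x hx
      rcases Finset.mem_insert.mp hx with rfl | hx
      · exact le_rfl
      · exact hmax x hx

/-- Embedding of the lattice into Euclidean space. -/
def toE (x : Site d) : EuclideanSpace ℝ (Fin d) := WithLp.toLp 2 (fun i => (x i : ℝ))

lemma norm_toE (x : Site d) : ‖toE x‖ = enorm x := by
  rw [EuclideanSpace.norm_eq, enorm, nsq]
  simp [toE]

/-- Unit cell with corner `x`. -/
def cell (x : Site d) : Set (EuclideanSpace ℝ (Fin d)) := {z | ∀ i, ⌊z i⌋ = x i}

lemma cell_eq (x : Site d) : cell x = (WithLp.ofLp (p := 2)) ⁻¹'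
    (Set.pi Set.univ fun i => Set.Ico (x i : ℝ) ((x i : ℝ) + 1)) := by
  ext z
  simp [cell, Int.floor_eq_iff]

lemma cell_meas (x : Site d) : MeasurableSet (cell x) := by
  rw [cell_eq]
  exact (PiLp.volume_preserving_ofLp (Fin d)).measurable
    (MeasurableSet.univ_pi fun i => measurableSet_Ico)

lemma cell_vol (x : Site d) : volume (cell x) = 1 := by
  rw [cell_eq, (PiLp.volume_preserving_ofLp (Fin d)).measure_preimage
    (MeasurableSet.univ_pi fun i => measurableSet_Ico).nullMeasurableSet, Real.volume_pi_Ico]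
  simp

lemma cell_dist (x : Site d) (z : EuclideanSpace ℝ (Fin d)) (hz : z ∈ cell x) :
    ‖z - toE x‖ ≤ √d := by
  rw [EuclideanSpace.norm_eq]
  apply Real.sqrt_le_sqrt
  calc ∑ i, ‖(z - toE x) i‖ ^ 2 ≤ ∑ i : Fin d, (1 : ℝ) := by
        refine Finset.sum_le_sum fun i _ => ?_
        have := hz i
        rw [Int.floor_eq_iff] at this
        simp only [toE, PiLp.sub_apply, Real.norm_eq_abs, sq_abs]
        nlinarith
    _ = d := by simp

lemma ballVol_pos : 0 < ballVol d := by
  unfold ballVol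
  exact ENNReal.toReal_pos (Metric.measure_ball_pos _ _ one_pos).ne' measure_ball_lt_top.ne

lemma count_upper (S : Finset (Site d)) (R : ℝ) (hR : 0 ≤ R) (hS : ∀ x ∈ S, enorm x ≤ R) :
    (S.card : ℝ) ≤ ballVol d * (R + √d) ^ d := by
  have h1 : volume (⋃ x ∈ S, cell x) = S.card := by
    rw [measure_biUnion_finset]
    · simp [cell_vol]
    · intro x _ y _ hxy
      rw [Function.onFun, Set.disjoint_left]
      intro z hz hz'
      exact hxy (funext fun i => (hz i).symm.trans (hz' i))
    · exact fun x _ => cell_meas x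
  have h2 : (⋃ x ∈ S, cell x) ⊆ Metric.closedBall 0 (R + √d) := by
    intro z hz
    simp only [Set.mem_iUnion] at hz
    obtain ⟨x, hx, hz⟩ := hz
    rw [mem_closedBall_zero_iff]
    have h3 := cell_dist x z hz
    have h4 := hS x hx
    rw [← norm_toE] at h4
    have h5 := norm_add_le (z - toE x) (toE x)
    rw [sub_add_cancel] at h5
    linarith
  have h3 := measure_mono (μ := volume) h2
  rw [h1, Measure.addHaar_closedBall _ _ (by positivity), finrank_euclideanSpace_fin] at h3
  have h4 := ENNReal.toReal_mono
    (ENNReal.mul_ne_top ENNReal.ofReal_ne_top measure_ball_lt_top.ne) h3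
  rw [ENNReal.toReal_mul, ENNReal.toReal_ofReal (by positivity), mul_comm] at h4
  simpa [ballVol] using h4

lemma count_lower (hd : 1 ≤ d) (S : Finset (Site d)) (R : ℝ) (hR : √d ≤ R) (hS : ∀ x, enorm x < R → x ∈ S) :
    ballVol d * (R - √d) ^ d ≤ S.card := by
  haveI : Nonempty (Fin d) := ⟨⟨0, hd⟩⟩
  have h1 : volume (⋃ x ∈ S, cell x) ≤ S.card := by
    refine (measure_biUnion_finset_le _ _).trans ?_
    simp [cell_vol]
  have h2 : Metric.ball 0 (R - √d) ⊆ (⋃ x ∈ S, cell x) := by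
    intro z hz
    rw [mem_ball_zero_iff] at hz
    have hc : z ∈ cell (fun i => ⌊z i⌋) := fun i => rfl
    simp only [Set.mem_iUnion]
    refine ⟨fun i => ⌊z i⌋, hS _ ?_, hc⟩
    rw [← norm_toE]
    have h3 := cell_dist _ z hc
    rw [norm_sub_rev] at h3
    have h5 := norm_add_le (toE (fun i => ⌊z i⌋) - z) z
    rw [sub_add_cancel] at h5
    linarith
  have h3 := (measure_mono (μ := volume) h2).trans h1
  rw [Measure.addHaar_ball _ _ (by linarith), finrank_euclideanSpace_fin] at h3
  have h4 := ENNReal.toReal_mono (ENNReal.natCast_ne_top _) h3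
  rw [ENNReal.toReal_mul, ENNReal.toReal_ofReal (pow_nonneg (by linarith) _), mul_comm] at h4
  simpa [ballVol] using h4

/-- Radius of `B_n`. -/
def rr (d n : ℕ) : ℝ := ((n : ℝ) / ballVol d) ^ (1 / (d : ℝ))

lemma rr_nonneg (n : ℕ) : 0 ≤ rr d n :=
  Real.rpow_nonneg (div_nonneg (Nat.cast_nonneg _) ballVol_pos.le) _

lemma rr_pow (hd : 1 ≤ d) (n : ℕ) : ballVol d * rr d n ^ d = n := by
  have hdpos : (0 : ℝ) < d := by exact_mod_cast hd
  have hw := ballVol_pos (d := d)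
  have h0 : 0 ≤ (n : ℝ) / ballVol d := div_nonneg (Nat.cast_nonneg _) hw.le
  rw [rr, ← Real.rpow_natCast, ← Real.rpow_mul h0]
  rw [one_div, inv_mul_cancel₀ hdpos.ne', Real.rpow_one]
  field_simp

lemma rr_mono {m n : ℕ} (h : m ≤ n) : rr d m ≤ rr d n := by
  have hw := ballVol_pos (d := d)
  unfold rr
  have : (m : ℝ) ≤ n := by exact_mod_cast h
  gcongr

lemma enorm_nonneg' (x : Site d) : 0 ≤ enorm x := Real.sqrt_nonneg _

lemma nsq_nonneg (x : Site d) : 0 ≤ nsq x := Finset.sum_nonneg fun _ _ => sq_nonneg _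

lemma enorm_sq (x : Site d) : enorm x ^ 2 = nsq x := Real.sq_sqrt (nsq_nonneg x)

lemma rr_le (hd : 1 ≤ d) (n : ℕ) (R : ℝ) (hR : 0 ≤ R) (h : (n : ℝ) ≤ ballVol d * R ^ d) :
    rr d n ≤ R := by
  rw [← rr_pow hd] at h
  have h2 := le_of_mul_le_mul_left h ballVol_pos
  exact (pow_le_pow_iff_left₀ (rr_nonneg n) hR (by omega)).mp h2

lemma mem_lball (hd : 1 ≤ d) (n : ℕ) (x : Site d) : x ∈ lball d n ↔ enorm x < rr d n := by
  unfold lball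
  rw [Set.mem_ofPred_eq, ← rr_pow hd n, mul_lt_mul_iff_right₀ ballVol_pos,
    pow_lt_pow_iff_left₀ (enorm_nonneg' x) (rr_nonneg n) (by omega)]

lemma coord_le (x : Site d) (i : Fin d) : |(x i : ℝ)| ≤ enorm x := by
  unfold enorm
  apply Real.abs_le_sqrt
  exact Finset.single_le_sum (f := fun i => (x i : ℝ) ^ 2) (fun _ _ => sq_nonneg _)
    (Finset.mem_univ i)

lemma lball_finite (hd : 1 ≤ d) (n : ℕ) : (lball d n).Finite := by
  refine (Set.finite_Icc (fun _ : Fin d => -⌈rr d n⌉) (fun _ => ⌈rr d n⌉)).subset ?_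
  intro x hx
  rw [mem_lball hd] at hx
  have h : ∀ i, |x i| ≤ ⌈rr d n⌉ := by
    intro i
    have h1 : ((|x i| : ℤ) : ℝ) ≤ ⌈rr d n⌉ := by
      push_cast
      exact (coord_le x i).trans (hx.le.trans (Int.le_ceil _))
    exact_mod_cast h1
  exact ⟨fun i => (abs_le.mp (h i)).1, fun i => (abs_le.mp (h i)).2⟩

lemma nsq_dir_le (x : Site d) (ε : Dir d) : nsq (x + dirVec d ε) ≤ (enorm x + 1) ^ 2 := by
  have h1 := nsq_step x ε
  have h2 := coord_le x ε.1
  have h3 := enorm_sq x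
  have h4 := abs_le.mp h2
  split_ifs at h1 <;> nlinarith

lemma exit_ball (hd : 1 ≤ d) (n : ℕ) : exitFun d (lball d n) 0 ≤ (rr d n + 1) ^ 2 := by
  set B := (lball_finite hd n).toFinset with hB
  have hBc : (B : Set (Site d)) = lball d n := by simp [hB]
  rw [← hBc]
  set g : Site d → ℝ := fun x => (rr d n + 1) ^ 2 - nsq x with hg
  have h := comparison hd B (exitFun d B) (fun x => max (g x) 0)
    (fun x hx => by rw [exit_out hd B x hx]; exact le_max_right _ _) (fun x hx => ?_) 0
  · have h0 : g 0 = (rr d n + 1) ^ 2 := by simp [hg, nsq]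
    simp only [h0] at h
    rwa [max_eq_left (sq_nonneg _)] at h
  · rw [exit_lap hd B x hx]
    have hx' : enorm x < rr d n := by
      rw [← mem_lball hd, ← hBc]; exact hx
    have hdir : ∀ ε : Dir d, 0 ≤ g (x + dirVec d ε) := by
      intro ε
      have h1 := nsq_dir_le x ε
      have h2 : (enorm x + 1) ^ 2 ≤ (rr d n + 1) ^ 2 := by
        have := enorm_nonneg' x
        gcongr
      simp only [hg]; linarith
    have e1 : ∀ i, max (g (x + unitVec d i)) 0 = g (x + unitVec d i) := fun i =>
      max_eq_left (by simpa [dirVec] using hdir (i, true))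
    have e2 : ∀ i, max (g (x - unitVec d i)) 0 = g (x - unitVec d i) := fun i =>
      max_eq_left (by simpa [dirVec, ← sub_eq_add_neg] using hdir (i, false))
    have e3 : max (g x) 0 = g x := by
      apply max_eq_left
      have h2 : enorm x ^ 2 ≤ (rr d n + 1) ^ 2 := by
        have := enorm_nonneg' x
        gcongr
        linarith
      rw [enorm_sq] at h2
      simp only [hg]; linarith
    have e4 : lap (fun x => max (g x) 0) x = lap g x := by
      unfold lap
      simp only [e1, e2, e3]
    rw [e4, hg, lap_sub, lap_const hd, lap_nsq hd]; norm_num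

lemma lball_sum (hd : 1 ≤ d) : ∃ C : ℝ, 0 ≤ C ∧ ∀ n : ℕ, 1 ≤ n →
    ∑ j ∈ Finset.Icc 1 n, exitFun d (lball d j) 0
      ≤ psi (lball d n) + C * ((n : ℝ) * (n : ℝ) ^ (1 / (d : ℝ))) := by
  have hdpos : (0 : ℝ) < d := by exact_mod_cast hd
  have hw := ballVol_pos (d := d)
  set c : ℝ := √d with hc
  have hc0 : 0 ≤ c := Real.sqrt_nonneg _
  set a : ℝ := (1 / ballVol d) ^ (1 / (d : ℝ)) with ha
  have ha0 : 0 ≤ a := by positivity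
  refine ⟨d * c * a + (2 + 2 * c) * a + 1, by positivity, ?_⟩
  intro n hn
  have hn1 : (1 : ℝ) ≤ n := by exact_mod_cast hn
  set q : ℝ := (n : ℝ) ^ (1 / (d : ℝ)) with hq
  have hq1 : 1 ≤ q := Real.one_le_rpow hn1 (by positivity)
  have hrq : rr d n = a * q := by
    rw [rr, ha, hq, ← Real.mul_rpow (by positivity) (by positivity)]
    congr 1; ring
  set B := (lball_finite hd n).toFinset with hB
  have hBc : (B : Set (Site d)) = lball d n := by simp [hB]
  have hpsi : psi (lball d n) = ∑ x ∈ B, nsq x := by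
    rw [psi, ← hBc, finsum_mem_coe_finset]
  have hBmem : ∀ x, x ∈ B ↔ enorm x < rr d n := by
    intro x; rw [← mem_lball hd, ← hBc]; simp
  set ρ : ℕ → ℝ := fun j => (max (rr d j - c) 0) ^ 2 with hρ
  have hlow : ∑ j ∈ Finset.Icc 1 B.card, ρ j ≤ ∑ x ∈ B, nsq x := by
    apply sort_lower
    intro x hx j hj
    have h1 := count_upper (B.filter (fun y => nsq y ≤ nsq x)) (enorm x) (enorm_nonneg' x)
      (fun y hy => Real.sqrt_le_sqrt (Finset.mem_filter.mp hy).2)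
    have h2 : (j : ℝ) ≤ ballVol d * (enorm x + c) ^ d := le_trans (by exact_mod_cast hj) h1
    have h3 := rr_le hd j _ (add_nonneg (enorm_nonneg' x) hc0) h2
    rw [← enorm_sq]
    simp only [hρ]
    have h4 := enorm_nonneg' x
    have h5 : max (rr d j - c) 0 ≤ enorm x := max_le (by linarith) h4
    have h6 : 0 ≤ max (rr d j - c) 0 := le_max_right _ _
    gcongr
  have hρ0 : ∀ j, 0 ≤ ρ j := fun j => sq_nonneg _
  have hρn : ∀ j ∈ Finset.Icc 1 n, ρ j ≤ rr d n ^ 2 := by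
    intro j hj
    have h1 := rr_mono (d := d) (Finset.mem_Icc.mp hj).2
    simp only [hρ]
    have h5 : max (rr d j - c) 0 ≤ rr d n := max_le (by linarith) (rr_nonneg n)
    have h6 : 0 ≤ max (rr d j - c) 0 := le_max_right _ _
    gcongr
  -- missing points
  set N := B.card with hN
  have hmiss : ((n - N : ℕ) : ℝ) ≤ ballVol d * (d * c * rr d n ^ (d - 1)) := by
    set m := max (rr d n - c) 0 with hm
    have hm0 : 0 ≤ m := le_max_right _ _
    have hmr : m ≤ rr d n := max_le (by linarith) (rr_nonneg n)
    have hcm : rr d n - m ≤ c := by have := le_max_left (rr d n - c) 0; linarith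
    have h1 : ballVol d * m ^ d ≤ N := by
      by_cases hcr : c ≤ rr d n
      · rw [hm, max_eq_left (by linarith)]
        exact count_lower hd B (rr d n) hcr fun x hx => (hBmem x).mpr hx
      · push Not at hcr
        rw [hm, max_eq_right (by linarith), zero_pow (by omega), mul_zero]
        positivity
    have h2 : rr d n ^ d - m ^ d ≤ d * c * rr d n ^ (d - 1) := by
      have := abs_pow_sub_pow_le (rr d n) m d
      rw [abs_of_nonneg (rr_nonneg n), abs_of_nonneg hm0, max_eq_left hmr,
        abs_of_nonneg (sub_nonneg.mpr hmr)] at this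
      refine (le_abs_self _).trans (this.trans ?_)
      have h3 : 0 ≤ d * rr d n ^ (d - 1) := mul_nonneg hdpos.le (pow_nonneg (rr_nonneg n) _)
      nlinarith
    have h3 := mul_le_mul_of_nonneg_left h2 hw.le
    rw [mul_sub, rr_pow hd] at h3
    rcases le_total N n with h | h
    · rw [Nat.cast_sub h]; linarith
    · rw [Nat.sub_eq_zero_of_le h, Nat.cast_zero]
      exact mul_nonneg hw.le (mul_nonneg (by positivity) (pow_nonneg (rr_nonneg n) _))
  have hsplit : ∑ j ∈ Finset.Icc 1 n, ρ j
      ≤ ∑ j ∈ Finset.Icc 1 N, ρ j + ((n - N : ℕ) : ℝ) * rr d n ^ 2 := by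
    rw [← Finset.sum_filter_add_sum_filter_not (Finset.Icc 1 n) (fun j => j ≤ N)]
    refine add_le_add ?_ ?_
    · refine Finset.sum_le_sum_of_subset_of_nonneg ?_ fun j _ _ => hρ0 j
      intro j hj
      simp only [Finset.mem_filter, Finset.mem_Icc] at hj ⊢
      omega
    · have h1 : (Finset.Icc 1 n).filter (fun j => ¬ j ≤ N) ⊆ Finset.Ioc N n := by
        intro j hj
        simp only [Finset.mem_filter, Finset.mem_Icc, Finset.mem_Ioc] at hj ⊢
        omega
      have h2 := Finset.card_le_card h1
      rw [Nat.card_Ioc] at h2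
      refine (Finset.sum_le_card_nsmul _ _ (rr d n ^ 2)
        fun j hj => hρn j (Finset.mem_filter.mp hj).1).trans ?_
      rw [nsmul_eq_mul]
      refine mul_le_mul_of_nonneg_right ?_ (sq_nonneg _)
      exact_mod_cast h2
  have hmiss2 : ((n - N : ℕ) : ℝ) * rr d n ^ 2 ≤ d * c * a * (n * q) := by
    refine (mul_le_mul_of_nonneg_right hmiss (sq_nonneg _)).trans (le_of_eq ?_)
    have h1 : rr d n ^ (d - 1) * rr d n = rr d n ^ d := by
      rw [← pow_succ]; congr 1; omega
    calc ballVol d * (d * c * rr d n ^ (d - 1)) * rr d n ^ 2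
        = d * c * rr d n * (ballVol d * (rr d n ^ (d - 1) * rr d n)) := by ring
      _ = d * c * a * (n * q) := by rw [h1, rr_pow hd, hrq]; ring
  have hterm : ∀ j ∈ Finset.Icc 1 n, exitFun d (lball d j) 0
      ≤ ρ j + ((2 + 2 * c) * a + 1) * q := by
    intro j hj
    have h1 := exit_ball hd j
    have h2 := rr_mono (d := d) (Finset.mem_Icc.mp hj).2
    have h3 := rr_nonneg (d := d) j
    have h4 : rr d j ^ 2 - 2 * c * rr d j ≤ ρ j := by
      simp only [hρ]
      rcases le_total c (rr d j) with h | h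
      · rw [max_eq_left (by linarith)]; nlinarith
      · rw [max_eq_right (by linarith)]; nlinarith
    rw [hrq] at h2
    nlinarith
  have hfin := Finset.sum_le_sum hterm
  rw [Finset.sum_add_distrib] at hfin
  simp only [Finset.sum_const, Nat.card_Icc, nsmul_eq_mul, Nat.add_sub_cancel] at hfin
  rw [hpsi]
  have : (d * c * a + (2 + 2 * c) * a + 1) * (n * q)
      = d * c * a * (n * q) + n * (((2 + 2 * c) * a + 1) * q) := by ring
  rw [this]
  linarith
end counting

/-- `m(j) = φ(j) + e_o(B_j)`. -/
def mj (d j : ℕ) : ℝ := phi d j + exitFun d (lball d j) 0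

lemma ebar_le_mj {d : ℕ} (hd : 1 ≤ d) (A : Finset (Site d)) (j : ℕ) (hA : A.card ≤ j) :
    ebar d A ≤ mj d j := by
  haveI : Nonempty (Fin d) := ⟨⟨0, hd⟩⟩
  haveI : Infinite (Site d) := inferInstanceAs (Infinite (Fin d → ℤ))
  obtain ⟨B, hAB, hB⟩ := Infinite.exists_superset_card_eq A j hA
  refine (ebar_mono hd A B hAB).trans ?_
  obtain ⟨K, hK0, hK⟩ := ebar_bound hd
  have hbdd : BddAbove {t | ∃ A : Set (Site d), A.Finite ∧ A.ncard = j
      ∧ t = ebar d A - exitFun d (lball d j) 0} := by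
    refine ⟨K * (j : ℝ) ^ (2 / (d : ℝ)) - exitFun d (lball d j) 0, ?_⟩
    rintro t ⟨S, hS, hSj, rfl⟩
    have h := hK hS.toFinset
    have h2 : hS.toFinset.card = j := by rw [← hSj, Set.ncard_eq_toFinset_card S hS]
    rw [h2, hS.coe_toFinset] at h
    linarith
  have : ebar d B - exitFun d (lball d j) 0 ≤ phi d j :=
    le_csSup hbdd ⟨B, B.finite_toSet, by rw [Set.ncard_coe_finset, hB], rfl⟩
  unfold mj
  linarith

lemma mj_nonneg {d : ℕ} (hd : 1 ≤ d) (j : ℕ) : 0 ≤ mj d j :=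
  (ebar_nonneg hd ∅).trans (ebar_le_mj hd ∅ j (by simp))

lemma M_le {d : ℕ} (hd : 1 ≤ d) (A : Finset (Site d)) (n : ℕ) (hA : A.card ≤ n) :
    ∑ x ∈ A, (exitFun d A 0 - exitFun d A x) ≤ ∑ j ∈ Finset.Icc 1 n, mj d j := by
  have h1 : ∑ x ∈ A, (exitFun d A 0 - exitFun d A x) ≤ ∑ x ∈ A, (ebar d A - exitFun d A x) :=
    Finset.sum_le_sum fun x _ => by have := exit_le_ebar hd A 0; linarith
  have h2 : ∑ x ∈ A, (ebar d A - exitFun d A x) ≤ ∑ j ∈ Finset.Icc 1 A.card, mj d j := by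
    apply sort_upper
    intro x hx j hj
    have h3 := ebar_level hd A (exitFun d A x) (exit_nonneg hd A x)
    have h4 := ebar_le_mj hd (A.filter (fun y => exitFun d A x < exitFun d A y)) j (by
      refine le_trans (le_of_eq ?_) hj
      congr 1
      refine Finset.filter_congr fun y _ => ?_
      constructor <;> intro h <;> linarith)
    linarith
  refine h1.trans (h2.trans ?_)
  exact Finset.sum_le_sum_of_subset_of_nonneg (Finset.Icc_subset_Icc_right hA)
    fun j _ _ => mj_nonneg hd j

lemma final_arith (dd K n q D W P M G Z C : ℝ) (hdd : 1 ≤ dd) (hK : 0 ≤ K) (hn : 1 ≤ n)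
    (hq : 1 ≤ q) (hD : 1 ≤ D) (hW : 0 ≤ W) (hWP : W ^ 2 ≤ n * dd * P)
    (hP : P ≤ M + D * (4 * W + 2 * dd * n) + D * G) (hM : M ≤ n * (K * q ^ 2))
    (hG : G ≤ 12 * dd ^ 3 * (n * q)) (hDZ : D ≤ Z) (hDZ3 : D ^ 3 ≤ Z ^ 2) (hDZ2 : D ^ 2 ≤ Z * q)
    (hC : C = 4 * (4 * dd + dd * K + 14 * dd ^ 4 + 1) + 2 * dd + 12 * dd ^ 3) :
    P ≤ M + C * (Z * (n * q)) := by
  set Y := Z * (n * q) with hY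
  set X := D * W with hX
  have hZ1 : 1 ≤ Z := hD.trans hDZ
  have hnq : 1 ≤ n * q := one_le_mul_of_one_le_of_one_le hn hq
  have hY1 : 1 ≤ Y := one_le_mul_of_one_le_of_one_le hZ1 hnq
  have hX0 : 0 ≤ X := by positivity
  have hd34 : dd ≤ dd ^ 3 := by nlinarith [sq_nonneg dd, mul_nonneg (by linarith : 0 ≤ dd) (by nlinarith : 0 ≤ dd ^ 2 - 1)]
  have hDnq : D * (n * q) ≤ Y := mul_le_mul_of_nonneg_right hDZ (by positivity)
  have hDn : D * n ≤ D * (n * q) :=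
    mul_le_mul_of_nonneg_left (by nlinarith) (by linarith)
  have hDG : D * G ≤ 12 * dd ^ 3 * (D * (n * q)) := by
    have := mul_le_mul_of_nonneg_left hG (by linarith : 0 ≤ D)
    linarith
  have hPX : P ≤ M + 4 * X + 2 * dd * (D * n) + 12 * dd ^ 3 * (D * (n * q)) := by
    have : D * (4 * W + 2 * dd * n) = 4 * X + 2 * dd * (D * n) := by rw [hX]; ring
    linarith
  have hPX2 : P ≤ n * (K * q ^ 2) + 4 * X + 14 * dd ^ 3 * (D * (n * q)) := by
    have h1 : 2 * dd * (D * n) ≤ 2 * dd ^ 3 * (D * (n * q)) := by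
      apply mul_le_mul _ hDn (by positivity) (by positivity)
      linarith
    linarith
  have hXsq : X ^ 2 ≤ dd * (K * Y ^ 2 + 4 * (Y * X) + 14 * dd ^ 3 * Y ^ 2) := by
    have a1 : X ^ 2 ≤ D ^ 2 * (n * dd * P) := by
      rw [hX, mul_pow]; exact mul_le_mul_of_nonneg_left hWP (by positivity)
    have a2 : D ^ 2 * (n * dd * P)
        ≤ D ^ 2 * (n * dd * (n * (K * q ^ 2) + 4 * X + 14 * dd ^ 3 * (D * (n * q)))) := by
      gcongr
    have a3 : D ^ 2 * (n * dd * (n * (K * q ^ 2) + 4 * X + 14 * dd ^ 3 * (D * (n * q))))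
        = dd * (K * (D * (n * q)) ^ 2 + 4 * ((D ^ 2 * n) * X)
            + 14 * dd ^ 3 * (D ^ 3 * (n ^ 2 * q))) := by ring
    have a4 : (D * (n * q)) ^ 2 ≤ Y ^ 2 := by gcongr
    have a5 : D ^ 2 * n ≤ Y := by
      have := mul_le_mul_of_nonneg_right hDZ2 (by linarith : 0 ≤ n)
      rw [hY]; linarith
    have a6 : D ^ 3 * (n ^ 2 * q) ≤ Y ^ 2 := by
      have : Y ^ 2 = Z ^ 2 * (n ^ 2 * q ^ 2) := by rw [hY]; ring
      rw [this]
      have hqq : q ≤ q ^ 2 := by nlinarith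
      gcongr
    rw [a3] at a2
    refine a1.trans (a2.trans ?_)
    gcongr
  set C3 := 4 * dd + dd * K + 14 * dd ^ 4 + 1 with hC3
  have hXC : X ≤ C3 * Y := by
    by_contra hcon
    push Not at hcon
    have hC31 : 1 ≤ C3 := by
      have : 0 ≤ 4 * dd + dd * K + 14 * dd ^ 4 := by positivity
      linarith
    have hYX : Y ≤ X := by nlinarith
    have hXpos : 0 < X := by linarith
    have b1 : C3 * Y * X < X * X := mul_lt_mul_of_pos_right hcon hXpos
    have b2 : (dd * K + 14 * dd ^ 4) * Y ^ 2 ≤ (dd * K + 14 * dd ^ 4) * (Y * X) := by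
      have : Y ^ 2 ≤ Y * X := by nlinarith
      gcongr
    have b3 : 0 ≤ Y * X := by positivity
    have b4 : C3 * Y * X = 4 * dd * (Y * X) + (dd * K + 14 * dd ^ 4) * (Y * X) + Y * X := by
      rw [hC3]; ring
    have b5 : dd * (K * Y ^ 2 + 4 * (Y * X) + 14 * dd ^ 3 * Y ^ 2)
      = 4 * dd * (Y * X) + (dd * K + 14 * dd ^ 4) * Y ^ 2 := by ring
    rw [b5] at hXsq
    have b6 : X ^ 2 = X * X := sq X
    linarith
  have c1 : 2 * dd * (D * n) ≤ 2 * dd * Y := by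
    have := hDn.trans hDnq
    gcongr
  have c2 : 12 * dd ^ 3 * (D * (n * q)) ≤ 12 * dd ^ 3 * Y := by gcongr
  rw [hC]
  linarith

theorem main_prop (d : ℕ) (hd : 1 ≤ d) :
    ∃ C : ℝ, ∀ (D : ℝ), 1 ≤ D → ∀ r : Site d → ℕ → Dir d, HasDiscrepancy d D r →
      ∀ n : ℕ, 1 ≤ n →
        psi (aggRegion r n) ≤ psi (lball d n) + PhiSum d n
          + C * D ^ (2 - 1 / (4 * (d : ℝ))) * (n : ℝ) ^ (1 + 1 / (d : ℝ)) := by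
  obtain ⟨K, hK0, hK⟩ := ebar_bound hd
  obtain ⟨C1, hC1, hball⟩ := lball_sum hd
  have hd1 : (1 : ℝ) ≤ d := by exact_mod_cast hd
  have hdpos : (0 : ℝ) < d := by linarith
  set C2 : ℝ := 4 * (4 * d + d * K + 14 * d ^ 4 + 1) + 2 * d + 12 * d ^ 3 with hC2
  have hC20 : 0 ≤ C2 := by positivity
  refine ⟨C1 + C2 + d, ?_⟩
  intro D hD r hr n hn
  have hD0 : 0 < D := by linarith
  have hn1 : (1 : ℝ) ≤ n := by exact_mod_cast hn
  set q : ℝ := (n : ℝ) ^ (1 / (d : ℝ)) with hq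
  have hq1 : 1 ≤ q := Real.one_le_rpow hn1 (by positivity)
  have hqd : q ^ d = n := by
    rw [hq, ← Real.rpow_natCast, ← Real.rpow_mul (by positivity), one_div,
      inv_mul_cancel₀ hdpos.ne', Real.rpow_one]
  have hq2 : (n : ℝ) ^ (2 / (d : ℝ)) = q ^ 2 := by
    rw [hq, ← Real.rpow_natCast, ← Real.rpow_mul (by positivity)]
    congr 1; push_cast; ring
  have hnq : (n : ℝ) ^ (1 + 1 / (d : ℝ)) = n * q := by
    rw [Real.rpow_add (by linarith), Real.rpow_one]
  have hnq1 : 1 ≤ n * q := one_le_mul_of_one_le_of_one_le hn1 hq1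
  rw [hnq]
  set Z : ℝ := D ^ (2 - 1 / (4 * (d : ℝ))) with hZ
  have hexp : 1 / (4 * (d : ℝ)) ≤ 1 / 4 := by
    apply one_div_le_one_div_of_le (by norm_num); linarith
  have hDZ : D ≤ Z := by
    calc D = D ^ (1 : ℝ) := (Real.rpow_one D).symm
      _ ≤ Z := Real.rpow_le_rpow_of_exponent_le hD (by linarith)
  have hDZ3 : D ^ 3 ≤ Z ^ 2 := by
    have : D ^ ((3 : ℝ) / 2) ≤ Z := Real.rpow_le_rpow_of_exponent_le hD (by linarith)
    calc D ^ 3 = (D ^ ((3 : ℝ) / 2)) ^ 2 := by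
          rw [← Real.rpow_natCast, ← Real.rpow_natCast, ← Real.rpow_mul hD0.le]
          norm_num
      _ ≤ Z ^ 2 := by gcongr
  have hZ1 : 1 ≤ Z := hD.trans hDZ
  obtain ⟨A, hA, h0, hcard, hbd, -, hf⟩ := agg_inv r (n - 1)
  have hAn : A.card ≤ n := by omega
  have hAnR : (A.card : ℝ) ≤ n := by exact_mod_cast hAn
  have hpsi : psi (aggRegion r n) = ∑ x ∈ A, nsq x := by
    rw [psi, aggRegion, hA, finsum_mem_coe_finset]
  have hPhi : ∑ j ∈ Finset.Icc 1 n, mj d j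
      ≤ psi (lball d n) + PhiSum d n + C1 * (Z * (n * q)) := by
    have h1 := hball n hn
    rw [← hq] at h1
    have h2 : ∑ j ∈ Finset.Icc 1 n, mj d j
        = PhiSum d n + ∑ j ∈ Finset.Icc 1 n, exitFun d (lball d j) 0 := by
      simp only [mj, PhiSum, Finset.sum_add_distrib]
    have h3 : C1 * (n * q) ≤ C1 * (Z * (n * q)) := by
      apply mul_le_mul_of_nonneg_left _ hC1
      nlinarith
    linarith
  have hY0 : 0 ≤ Z * (n * q) := by positivity
  have hdist : (C1 + C2 + d) * Z * (n * q)
      = C1 * (Z * (n * q)) + C2 * (Z * (n * q)) + d * (Z * (n * q)) := by ring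
  have hC2Y : 0 ≤ C2 * (Z * (n * q)) := by positivity
  have hdY : 0 ≤ d * (Z * (n * q)) := by positivity
  rw [hpsi, hdist]
  by_cases hDn : D ≤ (n : ℝ) ^ 4
  · have hDZ2 : D ^ 2 ≤ Z * q := by
      have h1 : D ^ (1 / (4 * (d : ℝ))) ≤ q := by
        calc D ^ (1 / (4 * (d : ℝ))) ≤ ((n : ℝ) ^ 4) ^ (1 / (4 * (d : ℝ))) :=
              Real.rpow_le_rpow hD0.le hDn (by positivity)
          _ = q := by
            rw [hq, ← Real.rpow_natCast, ← Real.rpow_mul (by positivity)]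
            congr 1; push_cast; field_simp
      calc D ^ 2 = Z * D ^ (1 / (4 * (d : ℝ))) := by
            rw [hZ, ← Real.rpow_add hD0, sub_add_cancel]; norm_num
        _ ≤ Z * q := by gcongr
    have hmain := rotor_main hd D hD0.le r hr (n - 1) A hf
    set M := ∑ x ∈ A, (exitFun d A 0 - exitFun d A x) with hM
    set W := ∑ x ∈ A, ∑ i, |(x i : ℝ)| with hW
    have hW0 : 0 ≤ W := Finset.sum_nonneg fun _ _ => Finset.sum_nonneg fun _ _ => abs_nonneg _
    have hWP : W ^ 2 ≤ n * d * ∑ x ∈ A, nsq x := by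
      rw [hW, ← Finset.sum_product']
      refine (sq_sum_le_card_mul_sum_sq).trans ?_
      simp only [sq_abs]
      rw [Finset.sum_product]
      have h1 : (((A ×ˢ (Finset.univ : Finset (Fin d))).card : ℕ) : ℝ) ≤ n * d := by
        simp only [Finset.card_product, Finset.card_univ, Fintype.card_fin]
        push_cast
        gcongr
      exact mul_le_mul_of_nonneg_right h1 (Finset.sum_nonneg fun x _ => nsq_nonneg x)
    have hMn : M ≤ n * (K * q ^ 2) := by
      have h1 : ebar d A ≤ K * q ^ 2 := by
        refine (hK A).trans ?_
        rw [← hq2]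
        gcongr
      calc M ≤ ∑ x ∈ A, K * q ^ 2 := by
            refine Finset.sum_le_sum fun x _ => ?_
            have h2 := exit_le_ebar hd A 0
            have h3 := exit_nonneg hd A x
            linarith
        _ = A.card * (K * q ^ 2) := by simp
        _ ≤ n * (K * q ^ 2) := by gcongr
    have hG := grad_sum_le hd A
    have hS := sum_exit_le hd A q hq1 (by rw [hqd]; exact hAnR)
    have hG2 : √((2 * d * A.card) * (2 * (2 * d * ∑ x ∈ A, exitFun d A x)))
        ≤ 12 * d ^ 3 * (n * q) := by
      rw [Real.sqrt_le_left (by positivity)]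
      calc (2 * d * A.card) * (2 * (2 * d * ∑ x ∈ A, exitFun d A x))
          ≤ (2 * d * n) * (2 * (2 * d * (18 * d ^ 3 * (n * q ^ 2)))) := by
            have hS' : ∑ x ∈ A, exitFun d A x ≤ 18 * d ^ 3 * (n * q ^ 2) :=
              hS.trans (by gcongr)
            have : 0 ≤ ∑ x ∈ A, exitFun d A x :=
              Finset.sum_nonneg fun x _ => exit_nonneg hd A x
            gcongr
        _ = 144 * (n * q) ^ 2 * d ^ 5 := by ring
        _ ≤ 144 * (n * q) ^ 2 * d ^ 6 := by
            have : (d : ℝ) ^ 5 ≤ d ^ 6 := pow_le_pow_right₀ hd1 (by norm_num)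
            gcongr
        _ = _ := by ring
    have hP : ∑ x ∈ A, nsq x ≤ M + D * (4 * W + 2 * d * n)
        + D * ∑ x ∈ A, ∑ ε : Dir d, |exitFun d A (x + dirVec d ε) - exitFun d A x| := by
      refine hmain.trans ?_
      gcongr
    have hfin := final_arith d K n q D W _ M _ Z C2 hd1 hK0 hn1 hq1 hD hW0 hWP hP hMn
      (hG.trans hG2) hDZ hDZ3 hDZ2 hC2
    have hMm := M_le hd A n hAn
    linarith
  · push Not at hDn
    have h1 : ∀ x ∈ A, nsq x ≤ d * (n : ℝ) ^ 2 := by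
      intro x hx
      unfold nsq
      calc ∑ i, (x i : ℝ) ^ 2 ≤ ∑ i : Fin d, (n : ℝ) ^ 2 := by
            refine Finset.sum_le_sum fun i _ => ?_
            have h2 := hbd x hx i
            have h3 : |x i| ≤ (n : ℤ) := h2.trans (by exact_mod_cast Nat.sub_le n 1)
            have h4 : |(x i : ℝ)| ≤ n := by exact_mod_cast h3
            rw [← sq_abs]
            gcongr
        _ = d * (n : ℝ) ^ 2 := by simp
    have h2 : ∑ x ∈ A, nsq x ≤ d * (Z * (n * q)) := by
      calc ∑ x ∈ A, nsq x ≤ ∑ x ∈ A, d * (n : ℝ) ^ 2 := Finset.sum_le_sum h1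
        _ = A.card * (d * (n : ℝ) ^ 2) := by simp
        _ ≤ n * (d * (n : ℝ) ^ 2) := by gcongr
        _ = d * (n : ℝ) ^ 3 := by ring
        _ ≤ d * (n : ℝ) ^ 4 := by
            have : (n : ℝ) ^ 3 ≤ (n : ℝ) ^ 4 := pow_le_pow_right₀ hn1 (by norm_num)
            gcongr
        _ ≤ d * Z := by have := hDn.le.trans hDZ; gcongr
        _ ≤ d * (Z * (n * q)) := by
            have : Z ≤ Z * (n * q) := by nlinarith
            gcongr
    have h3 : 0 ≤ ∑ j ∈ Finset.Icc 1 n, mj d j := Finset.sum_nonneg fun j _ => mj_nonneg hd j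
    linarith

end RotorRouterPaper
end
end

section
/- For every d ≥ 1 there is a constant C = C(d) such that for every n ≥ 1 and every finite set A ⊆ ℤ^d with |A| = n, the sum of |e_x(A) − e_y(A)| over all ordered pairs (x, y) with x, y ∈ A and x ∼ y is at most C n^{1 + 1/d}. -/
open scoped BigOperators Pointwise symmDiff
open MeasureTheory Filter

noncomputable section
open scoped Classical
namespace RotorRouterPaper

lemma summable_pair {d : ℕ} {f : Site d → ℝ} (hf : f.support.Finite) (v : Site d)
    (g : Site d → ℝ) (hg : ∀ x, f x = 0 → f (x + v) = 0 → g x = 0) :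
    g.support.Finite := by
  have h2 : (Function.support fun x => f (x + v)).Finite := by
    have : (Function.support fun x => f (x + v)) = (fun x => x + v) ⁻¹' f.support := rfl
    rw [this]
    exact hf.preimage ((add_left_injective v).injOn)
  refine (hf.union h2).subset ?_
  intro x hx
  by_contra hcon
  simp only [Set.mem_union, Function.mem_support, not_or, not_not] at hcon
  exact hx (hg x hcon.1 hcon.2)

lemma summ {d : ℕ} {f : Site d → ℝ} (hf : f.support.Finite) (v : Site d)
    (g : Site d → ℝ) (hg : ∀ x, f x = 0 → f (x + v) = 0 → g x = 0) : Summable g :=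
  summable_of_hasFiniteSupport (summable_pair hf v g hg)

/-- translation energy -/
def DD {d : ℕ} (f : Site d → ℝ) (v : Site d) : ℝ := ∑' x, (f (x + v) - f x) ^ 2

lemma DD_nonneg {d : ℕ} (f : Site d → ℝ) (v : Site d) : 0 ≤ DD f v :=
  tsum_nonneg fun _ => sq_nonneg _

lemma tsum_shift {d : ℕ} (f : Site d → ℝ) (v : Site d) : ∑' x, f (x + v) = ∑' x, f x :=
  (Equiv.addRight v).tsum_eq f

lemma DD_eq {d : ℕ} {f : Site d → ℝ} (hf : f.support.Finite) (v : Site d) :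
    DD f v = 2 * ∑' x, f x ^ 2 - 2 * ∑' x, f x * f (x + v) := by
  have h1 : Summable fun x => f x ^ 2 := summ hf v _ (fun x h _ => by simp [h])
  have h2 : Summable fun x => f (x + v) ^ 2 := summ hf v _ (fun x _ h => by simp [h])
  have h3 : Summable fun x => f x * f (x + v) := summ hf v _ (fun x h _ => by simp [h])
  have h4 : ∑' x, f (x + v) ^ 2 = ∑' x, f x ^ 2 := tsum_shift (fun x => f x ^ 2) v
  have : ∀ x, (f (x + v) - f x) ^ 2 = f (x + v) ^ 2 + f x ^ 2 - 2 * (f x * f (x + v)) :=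
    fun x => by ring
  unfold DD
  simp_rw [this]
  rw [(h2.add h1).tsum_sub (h3.mul_left 2), h2.tsum_add h1, tsum_mul_left, h4]
  ring

lemma sqrt_tri {d : ℕ} {g h : Site d → ℝ} (hg : g.support.Finite) (hh : h.support.Finite) :
    √(∑' x, (g x + h x) ^ 2) ≤ √(∑' x, g x ^ 2) + √(∑' x, h x ^ 2) := by
  set T : Finset (Site d) := hg.toFinset ∪ hh.toFinset with hT
  have hz : ∀ x ∉ T, g x = 0 ∧ h x = 0 := by
    intro x hx
    simpa [hT] using hx
  rw [tsum_eq_sum (s := T) (fun x hx => by simp [hz x hx]),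
    tsum_eq_sum (s := T) (fun x hx => by simp [hz x hx]),
    tsum_eq_sum (s := T) (fun x hx => by simp [hz x hx])]
  apply Real.sqrt_le_iff.mpr
  refine ⟨by positivity, ?_⟩
  have hcs := Real.sum_mul_le_sqrt_mul_sqrt T g h
  have e : ∑ x ∈ T, (g x + h x) ^ 2
      = ∑ x ∈ T, g x ^ 2 + ∑ x ∈ T, h x ^ 2 + 2 * ∑ x ∈ T, g x * h x := by
    rw [Finset.mul_sum, ← Finset.sum_add_distrib, ← Finset.sum_add_distrib]
    exact Finset.sum_congr rfl fun x _ => by ring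
  have s1 := Real.sq_sqrt (Finset.sum_nonneg fun x (_ : x ∈ T) => sq_nonneg (g x))
  have s2 := Real.sq_sqrt (Finset.sum_nonneg fun x (_ : x ∈ T) => sq_nonneg (h x))
  rw [e]
  nlinarith

lemma DD_sub {d : ℕ} {f : Site d → ℝ} (hf : f.support.Finite) (v w : Site d) :
    √(DD f (v + w)) ≤ √(DD f v) + √(DD f w) := by
  have hg : (fun x => f (x + v) - f x).support.Finite :=
    summable_pair hf v _ (fun x h h' => by simp [h, h'])
  have hh : (fun x => f (x + w) - f x).support.Finite :=
    summable_pair hf w _ (fun x h h' => by simp [h, h'])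
  have hg2 : (fun x => f (x + w + v) - f (x + w)).support.Finite :=
    hg.preimage (f := fun x => x + w) ((add_left_injective w).injOn)
  have := sqrt_tri hg2 hh
  have e1 : ∑' x, (f (x + w + v) - f (x + w)) ^ 2 = DD f v :=
    tsum_shift (fun x => (f (x + v) - f x) ^ 2) w
  rw [e1] at this
  refine le_trans (le_of_eq ?_) this
  congr 1
  refine tsum_congr fun x => ?_
  rw [show x + (v + w) = x + w + v by abel]
  ring

lemma DD_zero {d : ℕ} (f : Site d → ℝ) : DD f 0 = 0 := by simp [DD]

lemma DD_nsmul {d : ℕ} {f : Site d → ℝ} (hf : f.support.Finite) (k : ℕ) (v : Site d) :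
    √(DD f (k • v)) ≤ k * √(DD f v) := by
  induction k with
  | zero => simp [DD_zero]
  | succ k ih =>
    rw [succ_nsmul]
    have := DD_sub hf (k • v) v
    push_cast
    linarith

/-- box vector -/
def bvec {d L : ℕ} (v : Fin d → Fin L) : Site d := fun i => ((v i : ℕ) : ℤ)

lemma bvec_inj {d L : ℕ} : Function.Injective (bvec : (Fin d → Fin L) → Site d) := by
  intro v w h
  funext i
  have := congrFun h i
  simp only [bvec, Nat.cast_inj] at this
  exact Fin.ext this

lemma bvec_eq {d L : ℕ} (v : Fin d → Fin L) : bvec v = ∑ i, (v i : ℕ) • unitVec d i := by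
  funext j
  simp [bvec, unitVec, Finset.sum_apply]

lemma DD_box {d L : ℕ} {f : Site d → ℝ} (hf : f.support.Finite) (v : Fin d → Fin L) :
    DD f (bvec v) ≤ L ^ 2 * (d * ∑ i, DD f (unitVec d i)) := by
  have h1 : √(DD f (bvec v)) ≤ L * ∑ i, √(DD f (unitVec d i)) := by
    rw [bvec_eq]
    refine (Finset.le_sum_of_subadditive (fun w => √(DD f w)) (by simp [DD_zero])
      (DD_sub hf) Finset.univ _).trans ?_
    rw [Finset.mul_sum]
    refine Finset.sum_le_sum fun i _ => (DD_nsmul hf _ _).trans ?_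
    have : ((v i : ℕ) : ℝ) ≤ L := by exact_mod_cast (v i).2.le
    gcongr
  have h2 : (∑ i, √(DD f (unitVec d i))) ^ 2 ≤ d * ∑ i, DD f (unitVec d i) := by
    refine (sq_sum_le_card_mul_sum_sq).trans ?_
    simp [Real.sq_sqrt (DD_nonneg _ _)]
  calc DD f (bvec v) = √(DD f (bvec v)) ^ 2 := (Real.sq_sqrt (DD_nonneg _ _)).symm
    _ ≤ (L * ∑ i, √(DD f (unitVec d i))) ^ 2 := by gcongr
    _ = L ^ 2 * (∑ i, √(DD f (unitVec d i))) ^ 2 := by ring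
    _ ≤ _ := by gcongr

lemma corr_sum {d L : ℕ} {f : Site d → ℝ} (hf : f.support.Finite) :
    ∑ v : Fin d → Fin L, ∑' x, f x * f (x + bvec v) ≤ (∑' x, |f x|) ^ 2 := by
  have hs : Summable fun x => |f x| := summ hf 0 _ (fun x h _ => by simp [h])
  rw [← Summable.tsum_finsetSum
    (fun v _ => summ hf (bvec v) _ (fun x h _ => by simp [h]))]
  rw [sq, ← tsum_mul_right]
  refine Summable.tsum_le_tsum (fun x => ?_)
    (summ hf 0 _ (fun x h _ => by simp [h])) (hs.mul_right _)
  rw [← Finset.mul_sum]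
  have h1 : |∑ v : Fin d → Fin L, f (x + bvec v)| ≤ ∑' z, |f z| := by
    refine (Finset.abs_sum_le_sum_abs _ _).trans ?_
    have e : ∑' z, |f (x + z)| = ∑' z, |f z| := (Equiv.addLeft x).tsum_eq (fun z => |f z|)
    have hs2 : Summable fun z => |f (x + z)| := (Equiv.addLeft x).summable_iff.mpr hs
    rw [← e, ← Finset.sum_image (s := Finset.univ) (g := bvec) (f := fun z => |f (x + z)|)
      (fun a _ b _ h => bvec_inj h)]
    exact hs2.sum_le_tsum _ (fun _ _ => abs_nonneg _)
  calc _ ≤ |f x * ∑ v : Fin d → Fin L, f (x + bvec v)| := le_abs_self _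
    _ = |f x| * |∑ v : Fin d → Fin L, f (x + bvec v)| := abs_mul _ _
    _ ≤ _ := by gcongr

lemma l1_sq {d : ℕ} {f : Site d → ℝ} (A : Finset (Site d)) (hA : ∀ x ∉ A, f x = 0) :
    (∑' x, |f x|) ^ 2 ≤ A.card * ∑' x, f x ^ 2 := by
  rw [tsum_eq_sum (s := A) (fun x hx => by simp [hA x hx]),
    tsum_eq_sum (s := A) (fun x hx => by simp [hA x hx])]
  refine sq_sum_le_card_mul_sum_sq.trans ?_
  simp

lemma faber {d L : ℕ} {f : Site d → ℝ} (A : Finset (Site d)) (hA : ∀ x ∉ A, f x = 0)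
    (hL : 2 * A.card ≤ L ^ d) (hpos : 0 < L) :
    ∑' x, f x ^ 2 ≤ L ^ 2 * (d * ∑ i, DD f (unitVec d i)) := by
  have hf : f.support.Finite := A.finite_toSet.subset fun x hx => by
    by_contra h
    exact hx (hA x h)
  have hc := corr_sum (L := L) hf
  have hl := l1_sq A hA
  have hu : ∑ v : Fin d → Fin L, DD f (bvec v)
      ≤ L ^ d * (L ^ 2 * (d * ∑ i, DD f (unitVec d i))) := by
    refine (Finset.sum_le_sum fun v _ => DD_box hf v).trans ?_
    simp
  have hlow : ∑ v : Fin d → Fin L, DD f (bvec v)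
      = L ^ d * (2 * ∑' x, f x ^ 2) - 2 * ∑ v : Fin d → Fin L, ∑' x, f x * f (x + bvec v) := by
    rw [Finset.sum_congr rfl fun v _ => DD_eq hf (bvec v), Finset.sum_sub_distrib,
      ← Finset.mul_sum, ← Finset.mul_sum]
    simp
    ring
  have hq : 0 ≤ ∑' x, f x ^ 2 := tsum_nonneg fun _ => sq_nonneg _
  have hL' : 2 * (A.card : ℝ) ≤ (L : ℝ) ^ d := by exact_mod_cast hL
  have hLp : 0 < (L : ℝ) ^ d := by positivity
  have : (L : ℝ) ^ d * ∑' x, f x ^ 2 ≤ L ^ d * (L ^ 2 * (d * ∑ i, DD f (unitVec d i))) := by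
    nlinarith [mul_le_mul_of_nonneg_right hL' hq]
  exact le_of_mul_le_mul_left this hLp

lemma energy {d : ℕ} (hd : 1 ≤ d) {e : Site d → ℝ} (A : Finset (Site d))
    (he : IsExitFun d (A : Set (Site d)) e) :
    ∑ i, DD e (unitVec d i) = 2 * d * ∑' x, e x := by
  obtain ⟨hA, hE⟩ := he
  have hA' : ∀ x ∉ A, e x = 0 := fun x hx => hA x (by simpa using hx)
  have hf : e.support.Finite := A.finite_toSet.subset fun x hx => by
    by_contra h
    exact hx (hA x h)
  have hd' : (d : ℝ) ≠ 0 := by positivity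
  have key : ∀ x, 2 * d * e x
      = ∑ i, (2 * e x ^ 2 - e x * e (x + unitVec d i) - e x * e (x - unitVec d i)) := by
    intro x
    by_cases hx : x ∈ A
    · have h := hE x (by simpa using hx)
      have h' : ∑ i, (e (x + unitVec d i) + e (x - unitVec d i)) = 2 * d * (e x - 1) := by
        field_simp at h
        linarith
      have : ∑ i, (2 * e x ^ 2 - e x * e (x + unitVec d i) - e x * e (x - unitVec d i))
          = ∑ i : Fin d, 2 * e x ^ 2 - e x * ∑ i, (e (x + unitVec d i) + e (x - unitVec d i)) := by
        rw [Finset.mul_sum, ← Finset.sum_sub_distrib]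
        exact Finset.sum_congr rfl fun i _ => by ring
      rw [this, h']
      simp
      ring
    · simp [hA' x hx]
  rw [← tsum_mul_left, tsum_congr key, Summable.tsum_finsetSum
    (fun i _ => summ hf 0 _ (fun x h _ => by simp [h]))]
  refine Finset.sum_congr rfl fun i _ => ?_
  have h1 : Summable fun x => 2 * e x ^ 2 := summ hf 0 _ (fun x h _ => by simp [h])
  have h2 : Summable fun x => e x * e (x + unitVec d i) := summ hf 0 _ (fun x h _ => by simp [h])
  have h3 : Summable fun x => e x * e (x - unitVec d i) := summ hf 0 _ (fun x h _ => by simp [h])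
  have h4 : ∑' x, e x * e (x - unitVec d i) = ∑' x, e x * e (x + unitVec d i) := by
    rw [← tsum_shift (fun x => e x * e (x - unitVec d i)) (unitVec d i)]
    refine tsum_congr fun x => ?_
    rw [add_sub_cancel_right, mul_comm]
  rw [(h1.sub h2).tsum_sub h3, h1.tsum_sub h2, h4, tsum_mul_left, DD_eq hf]
  ring

lemma energy_bound {d L : ℕ} (hd : 1 ≤ d) {e : Site d → ℝ} (A : Finset (Site d))
    (he : IsExitFun d (A : Set (Site d)) e) (hL : 2 * A.card ≤ L ^ d) (hpos : 0 < L) :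
    ∑ i, DD e (unitVec d i) ≤ 4 * d ^ 3 * L ^ 2 * A.card := by
  have hen := energy hd A he
  have hA' : ∀ x ∉ A, e x = 0 := fun x hx => he.1 x (by simpa using hx)
  have hfb := faber A hA' hL hpos
  have hl := l1_sq A hA'
  have hG : 0 ≤ ∑ i, DD e (unitVec d i) := Finset.sum_nonneg fun i _ => DD_nonneg _ _
  have hS : |∑' x, e x| ≤ ∑' x, |e x| := by
    rw [tsum_eq_sum (s := A) (fun x hx => by simp [hA' x hx]),
      tsum_eq_sum (s := A) (fun x hx => by simp [hA' x hx])]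
    exact Finset.abs_sum_le_sum_abs _ _
  have hS2 : (∑' x, e x) ^ 2 ≤ (∑' x, |e x|) ^ 2 := by
    rw [← sq_abs (∑' x, e x)]
    gcongr
  set S := ∑' x, e x
  set G := ∑ i, DD e (unitVec d i)
  have hm : (A.card : ℝ) * ∑' x, e x ^ 2 ≤ A.card * (L ^ 2 * (d * G)) := by gcongr
  have hGG : G * G ≤ (4 * d ^ 3 * L ^ 2 * A.card) * G := by
    have : G * G = 4 * d ^ 2 * S ^ 2 := by
      rw [hen]
      ring
    rw [this]
    have h5 : S ^ 2 ≤ A.card * (L ^ 2 * (d * G)) := by linarith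
    calc (4 : ℝ) * d ^ 2 * S ^ 2 ≤ 4 * d ^ 2 * (A.card * (L ^ 2 * (d * G))) := by gcongr
      _ = _ := by ring
  rcases hG.eq_or_lt with h | h
  · rw [← h]
    positivity
  · exact le_of_mul_le_mul_right hGG h

lemma adj_dir {d : ℕ} {x y : Site d} (h : Adj x y) : ∃ ε : Dir d, y = x + dirVec d ε := by
  have h1 : ∑ i, (x i - y i) ^ 2 = (1 : ℤ) := by
    have : ((∑ i, (x i - y i) ^ 2 : ℤ) : ℝ) = 1 := by
      have h' : nsq (x - y) = 1 := h
      simp only [nsq, Pi.sub_apply] at h'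
      push_cast at h' ⊢
      exact h'
    exact_mod_cast this
  obtain ⟨i, hi⟩ : ∃ i, x i - y i ≠ 0 := by
    by_contra hcon
    push Not at hcon
    simp [hcon] at h1
  have hsplit := Finset.add_sum_erase Finset.univ (fun j => (x j - y j) ^ 2) (Finset.mem_univ i)
  have hpos : 0 < (x i - y i) ^ 2 := by positivity
  have hrest : 0 ≤ ∑ j ∈ Finset.univ.erase i, (x j - y j) ^ 2 :=
    Finset.sum_nonneg fun _ _ => sq_nonneg _
  have hzero : ∑ j ∈ Finset.univ.erase i, (x j - y j) ^ 2 = 0 := by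
    linarith
  have hone : (x i - y i) ^ 2 = 1 := by
    linarith
  have hz : ∀ j, j ≠ i → y j = x j := by
    intro j hj
    have := (Finset.sum_eq_zero_iff_of_nonneg (fun _ _ => sq_nonneg _)).mp hzero j
      (by simp [hj])
    have := pow_eq_zero_iff (two_ne_zero) |>.mp this
    linarith
  rcases (by simpa using hone : x i - y i = 1 ∨ x i - y i = -1) with h2 | h2
  · refine ⟨(i, false), ?_⟩
    funext j
    by_cases hj : j = i
    · subst hj
      simp [dirVec, unitVec]
      linarith
    · simp [dirVec, unitVec, hj, hz j hj]
  · refine ⟨(i, true), ?_⟩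
    funext j
    by_cases hj : j = i
    · subst hj
      simp [dirVec, unitVec]
      linarith
    · simp [dirVec, unitVec, hj, hz j hj]

lemma DD_neg {d : ℕ} (f : Site d → ℝ) (v : Site d) : DD f (-v) = DD f v := by
  unfold DD
  rw [← tsum_shift _ v]
  refine tsum_congr fun x => ?_
  rw [add_neg_cancel_right]
  ring

lemma pair_sum {d : ℕ} {e : Site d → ℝ} (A : Finset (Site d)) (hA : ∀ x ∉ A, e x = 0) :
    (∑ᶠ p ∈ {p : Site d × Site d | p.1 ∈ (A : Set (Site d)) ∧ p.2 ∈ (A : Set (Site d))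
        ∧ Adj p.1 p.2}, |e p.1 - e p.2|) ^ 2
      ≤ (A.card * (2 * d)) * (2 * ∑ i, DD e (unitVec d i)) := by
  have hf : e.support.Finite := A.finite_toSet.subset fun x hx => by
    by_contra h
    exact hx (hA x (by simpa using h))
  set g : Site d × Dir d → Site d × Site d := fun q => (q.1, q.1 + dirVec d q.2) with hg
  set T : Finset (Site d × Dir d) := A ×ˢ Finset.univ with hT
  have hsub : {p : Site d × Site d | p.1 ∈ (A : Set (Site d)) ∧ p.2 ∈ (A : Set (Site d))
      ∧ Adj p.1 p.2} ⊆ (T.image g : Finset (Site d × Site d)) := by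
    rintro ⟨x, y⟩ ⟨hx, -, hxy⟩
    obtain ⟨ε, hε⟩ := adj_dir hxy
    simp only at hε
    subst hε
    simp only [Finset.coe_image, Set.mem_image]
    exact ⟨(x, ε), by simpa [hT] using hx, rfl⟩
  have hfin := (T.image g).finite_toSet.subset hsub
  have h1 : (∑ᶠ p ∈ {p : Site d × Site d | p.1 ∈ (A : Set (Site d)) ∧ p.2 ∈ (A : Set (Site d))
        ∧ Adj p.1 p.2}, |e p.1 - e p.2|) ≤ ∑ q ∈ T, |e q.1 - e (q.1 + dirVec d q.2)| := by
    rw [finsum_mem_eq_finite_toFinset_sum _ hfin]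
    refine (Finset.sum_le_sum_of_subset_of_nonneg (t := T.image g) ?_ ?_).trans ?_
    · intro p hp
      exact_mod_cast hsub (hfin.mem_toFinset.mp hp)
    · intros
      positivity
    · exact Finset.sum_image_le_of_nonneg (fun u _ => abs_nonneg _)
  have h0 : 0 ≤ (∑ᶠ p ∈ {p : Site d × Site d | p.1 ∈ (A : Set (Site d)) ∧
      p.2 ∈ (A : Set (Site d)) ∧ Adj p.1 p.2}, |e p.1 - e p.2|) := by
    rw [finsum_mem_eq_finite_toFinset_sum _ hfin]
    positivity
  have h2 : ∑ q ∈ T, |e q.1 - e (q.1 + dirVec d q.2)| ^ 2 ≤ 2 * ∑ i, DD e (unitVec d i) := by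
    rw [hT, Finset.sum_product_right]
    have hb : ∀ ε : Dir d, ∑ x ∈ A, |e x - e (x + dirVec d ε)| ^ 2 ≤ DD e (unitVec d ε.1) := by
      intro ε
      have e1 : DD e (dirVec d ε) = DD e (unitVec d ε.1) := by
        unfold dirVec
        split_ifs
        · rfl
        · exact DD_neg _ _
      rw [← e1]
      refine le_trans (le_of_eq ?_) (Summable.sum_le_tsum A (fun _ _ => sq_nonneg _)
        (summ hf (dirVec d ε) _ (fun x h h' => by simp [h, h'])))
      refine Finset.sum_congr rfl fun x _ => ?_
      rw [sq_abs]
      ring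
    refine (Finset.sum_le_sum fun ε _ => hb ε).trans ?_
    rw [Fintype.sum_prod_type, Finset.mul_sum]
    simp [two_mul]
  have hcard : (T.card : ℝ) = A.card * (2 * d) := by
    rw [hT, Finset.card_product, Finset.card_univ, Fintype.card_prod, Fintype.card_fin,
      Fintype.card_bool]
    push_cast
    ring
  calc _ ≤ (∑ q ∈ T, |e q.1 - e (q.1 + dirVec d q.2)|) ^ 2 := by gcongr
    _ ≤ T.card * ∑ q ∈ T, |e q.1 - e (q.1 + dirVec d q.2)| ^ 2 := sq_sum_le_card_mul_sum_sq
    _ ≤ _ := by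
      rw [hcard]
      gcongr

theorem lemma_cauchyschwarz (d : ℕ) (hd : 1 ≤ d) :
    ∃ C : ℝ, ∀ n : ℕ, 1 ≤ n → ∀ A : Set (Site d), A.Finite → A.ncard = n →
      (∑ᶠ p ∈ {p : Site d × Site d | p.1 ∈ A ∧ p.2 ∈ A ∧ Adj p.1 p.2},
        |exitFun d A p.1 - exitFun d A p.2|) ≤ C * (n : ℝ) ^ (1 + 1 / (d : ℝ)) := by
  refine ⟨16 * (d : ℝ) ^ 2, fun n hn A hAf hAn => ?_⟩
  by_cases hex : ∃ e, IsExitFun d A e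
  swap
  · have : exitFun d A = 0 := by
      unfold exitFun
      rw [dif_neg hex]
    simp only [this, Pi.zero_apply, sub_self, abs_zero, finsum_zero]
    positivity
  have he : IsExitFun d A (exitFun d A) := by
    unfold exitFun
    rw [dif_pos hex]
    exact hex.choose_spec
  generalize exitFun d A = e at he
  obtain ⟨B, rfl⟩ : ∃ B : Finset (Site d), A = (B : Set (Site d)) :=
    ⟨hAf.toFinset, by simp⟩
  have hcard : B.card = n := by simpa using hAn
  have hA' : ∀ x ∉ B, e x = 0 := fun x hx => he.1 x (by simpa using hx)
  have hn1 : (1 : ℝ) ≤ n := by exact_mod_cast hn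
  have hd0 : (d : ℝ) ≠ 0 := by positivity
  set r : ℝ := (n : ℝ) ^ (1 / (d : ℝ)) with hr
  have hr1 : 1 ≤ r := Real.one_le_rpow hn1 (by positivity)
  have hrd : r ^ d = n := by
    rw [hr, ← Real.rpow_natCast, ← Real.rpow_mul (by positivity)]
    field_simp
    simp
  set L : ℕ := ⌈2 * r⌉₊ with hLdef
  have hLlow : 2 * r ≤ L := Nat.le_ceil _
  have hLup : (L : ℝ) ≤ 4 * r := by
    have := (Nat.ceil_lt_add_one (a := 2 * r) (by positivity)).le
    linarith
  have hLpos : 0 < L := by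
    have : (0 : ℝ) < L := by linarith
    exact_mod_cast this
  have hL : 2 * B.card ≤ L ^ d := by
    have h1 : (2 * r) ^ d ≤ (L : ℝ) ^ d := by gcongr
    have h2 : (2 : ℝ) ≤ 2 ^ d := by
      calc (2 : ℝ) = 2 ^ 1 := by norm_num
        _ ≤ 2 ^ d := pow_le_pow_right₀ (by norm_num) hd
    rw [mul_pow, hrd] at h1
    have h3 : 2 * (B.card : ℝ) ≤ (L : ℝ) ^ d := by
      rw [hcard]
      nlinarith
    exact_mod_cast h3
  have hE := energy_bound hd B he hL hLpos
  have hP := pair_sum B hA'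
  rw [hcard] at hE hP
  have hpow : (n : ℝ) ^ (1 + 1 / (d : ℝ)) = n * r := by
    rw [Real.rpow_add (by positivity), Real.rpow_one]
  rw [hpow]
  refine le_of_abs_le (abs_le_of_sq_le_sq (le_trans hP ?_) (by positivity))
  calc (n : ℝ) * (2 * d) * (2 * ∑ i, DD e (unitVec d i))
      ≤ n * (2 * d) * (2 * (4 * d ^ 3 * L ^ 2 * n)) := by gcongr
    _ ≤ n * (2 * d) * (2 * (4 * d ^ 3 * (4 * r) ^ 2 * n)) := by gcongr
    _ = (16 * d ^ 2 * (n * r)) ^ 2 := by ring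

end RotorRouterPaper
end
end
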